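/- The integral-reflection operators I_j (0 ≤ j ≤ n), the action of Ω, and the translations t_λ (λ ∈ P) on functions P → ℂ satisfy the defining relations of the double affine Hecke algebra at critical level: (i) (I_j − τ_j)∘(I_j + τ_j⁻¹) = 0 for every j ∈ {0,…,n}; (ii) for all 0 ≤ j ≠ k ≤ n, if the order m of s_{a_j}s_{a_k} in W is finite, then I_j∘I_k∘I_j∘⋯ = I_k∘I_j∘I_k∘⋯ with m factors on each side; (iii) for every u ∈ Ω (acting by (uf)(λ) := f(u⁻¹λ)), u∘I_j∘u⁻¹ = I_{u_j} and u∘t_λ∘u⁻¹ = t_{u′λ}, where u′ is the linear part of u; (iv) t_λ∘t_μ = t_{λ+μ}; (v) for every j ∈ {0,…,n} and ν ∈ P_ϑ, I_j∘t_ν = t_{s_j′ν}∘I_j + (τ_j − τ_j⁻¹)·G_{j,ν}, where s_j′ is the linear part of s_{a_j}, and G_{j,ν} := t_ν + t_{ν−α_j} + ⋯ + t_{s_j′ν+α_j} if ⟨ν,α_j∨⟩ > 0, G_{j,ν} := 0 if ⟨ν,α_j∨⟩ = 0, and G_{j,ν} := −(t_{ν+α_j} + t_{ν+2α_j} + ⋯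 + t_{s_j′ν}) if ⟨ν,α_j∨⟩ < 0. Consequently T_j ↦ I_j, T_u ↦ u, X^λ ↦ t_λ extends to a representation of the double affine Hecke algebra at critical level on functions P → ℂ. -/

import Mathlib

open scoped RealInnerProductSpace BigOperators Classical

noncomputable section

/-- Alternating composition `A ∘ B ∘ A ∘ ⋯` with `m` factors (starting with `A`). -/
def altComp {α : Type*} (A B : α → α) : ℕ → (α → α)
  | 0 => id
  | m + 1 => A ∘ altComp B A m

/-- The sign of a real number, as an integer (with `sgnZ 0 = 0`). -/
def sgnZ (x : ℝ) : ℤ := if 0 < x then 1 else if x < 0 then -1 else 0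

/-- The function `v(x) = (1-t²)∫₀ˣ dy/(1-2t cos y+t²)`. -/
def mvfun (t x : ℝ) : ℝ :=
  (1 - t ^ 2) * ∫ y in (0:ℝ)..x, 1 / (1 - 2 * t * Real.cos y + t ^ 2)

section AffineOps

variable {V : Type*} [NormedAddCommGroup V] [InnerProductSpace ℝ V]

/-- The coroot `α∨ = 2α/⟨α,α⟩`. -/
def coroot (α : V) : V := (2 / ⟪α, α⟫) • α

/-- The affine root `a = α∨ + r c` (encoded as the pair `(α, r)`), as an affine
function on `V`. -/
def aval (c : ℝ) (a : V × ℤ) (x : V) : ℝ := ⟪x, coroot a.1⟫ + a.2 * c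

/-- The affine reflection `s_a(x) = x - a(x) α` attached to `a = α∨ + r c`. -/
def sAff (c : ℝ) (a : V × ℤ) (x : V) : V := x - aval c a x • a.1

/-- `w` maps the affine root `a` to the affine root `b`, i.e. `(wa)(x) = a(w⁻¹x) = b(x)`. -/
def mapsRoot (c : ℝ) (w : Equiv.Perm V) (a b : V × ℤ) : Prop :=
  ∀ x : V, aval c a (w⁻¹ x) = aval c b x

/-- The linear part `w′` of an affine transformation `w`. -/
def linPart (w : Equiv.Perm V) (x : V) : V := w x - w 0

variable {R : Type*} [Field R]

/-- The difference-reflection operator `T̂_a`. -/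
def hatT (c : ℝ) (τ : V × ℤ → R) (a : V × ℤ) (f : V → R) (x : V) : R :=
  if 0 < aval c a x then τ a * f (sAff c a x)
  else if aval c a x = 0 then τ a * f x
  else (τ a)⁻¹ * f (sAff c a x) + (τ a - (τ a)⁻¹) * f x

/-- The discrete integral operator `J_a`. -/
def Jop (c : ℝ) (a : V × ℤ) (f : V → R) (x : V) : R :=
  if 0 < aval c a x then
    - ∑ k ∈ Finset.Icc (1 : ℤ) ⌊aval c a x⌋, f (x - k • a.1)
  else if aval c a x = 0 then 0
  else ∑ k ∈ Finset.Ico (0 : ℤ) (-⌊aval c a x⌋), f (x + k • a.1)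

/-- The integral-reflection operator `I_a = τ_a s_a + (τ_a - τ_a⁻¹) J_a`. -/
def Iop (c : ℝ) (τ : V × ℤ → R) (a : V × ℤ) (f : V → R) (x : V) : R :=
  τ a * f (sAff c a x) + (τ a - (τ a)⁻¹) * Jop c a f x

end AffineOps

/-- An irreducible reduced crystallographic root system spanning `V`, together with a
choice of positive roots, simple roots, and the highest short root. -/
structure RootSystemData (V : Type*) [NormedAddCommGroup V] [InnerProductSpace ℝ V] :
    Type _ where
  n : ℕ
  n_pos : 1 ≤ n
  rank_eq : Module.finrank ℝ V = n
  R0 : Finset V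
  ne_zero : ∀ α ∈ R0, α ≠ (0 : V)
  span_top : Submodule.span ℝ (R0 : Set V) = ⊤
  reduced : ∀ α ∈ R0, ∀ t : ℝ, t • α ∈ R0 → t = 1 ∨ t = -1
  crystallographic : ∀ α ∈ R0, ∀ β ∈ R0, ∃ k : ℤ, ⟪β, coroot α⟫ = (k : ℝ)
  reflect_mem : ∀ α ∈ R0, ∀ β ∈ R0, β - ⟪β, coroot α⟫ • α ∈ R0
  irreducible : ∀ S : Finset V, S ⊆ R0 →
      (∀ a ∈ S, ∀ b ∈ R0, b ∉ S → ⟪a, b⟫ = 0) → S = ∅ ∨ S = R0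
  pos : Finset V
  pos_subset : pos ⊆ R0
  pos_or_neg : ∀ α ∈ R0, α ∈ pos ∨ -α ∈ pos
  pos_not_both : ∀ α ∈ pos, -α ∉ pos
  pos_add : ∀ α ∈ pos, ∀ β ∈ pos, α + β ∈ R0 → α + β ∈ pos
  simpleRoot : Fin n → V
  simpleRoot_mem : ∀ j, simpleRoot j ∈ pos
  pos_natCombo : ∀ α ∈ pos, ∃ k : Fin n → ℕ, α = ∑ j, (k j : ℝ) • simpleRoot j
  hshort : V
  hshort_mem : hshort ∈ pos
  hshort_short : ∀ α ∈ R0, ‖hshort‖ ≤ ‖α‖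
  hshort_highest : ∀ α ∈ R0, ‖α‖ = ‖hshort‖ →
      ∃ k : Fin n → ℕ, hshort - α = ∑ j, (k j : ℝ) • simpleRoot j

namespace RootSystemData

variable {V : Type*} [NormedAddCommGroup V] [InnerProductSpace ℝ V]
variable (D : RootSystemData V)

/-- The weight lattice `P`. -/
def weightLattice : Set V :=
  {x : V | ∀ α ∈ D.R0, ∃ k : ℤ, ⟪x, coroot α⟫ = (k : ℝ)}

/-- The root lattice `Q`. -/
def rootLattice : Set V := (Submodule.span ℤ (D.R0 : Set V) : Set V)

/-- The coweight lattice `P∨`. -/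
def coweightLattice : Set V :=
  {x : V | ∀ α ∈ D.R0, ∃ k : ℤ, ⟪x, α⟫ = (k : ℝ)}

/-- The dominant cone. -/
def dominant : Set V := {x : V | ∀ α ∈ D.pos, 0 ≤ ⟪x, coroot α⟫}

/-- `ω` is a minuscule (dominant) weight. -/
def IsMinuscule (ω : V) : Prop :=
  ω ∈ D.weightLattice ∧ ω ∈ D.dominant ∧ ω ≠ 0 ∧
    ∀ α ∈ D.pos, ⟪ω, coroot α⟫ ≤ 1

/-- `ω` is the quasi-minuscule weight, i.e. the highest short root. -/
def IsQuasiMinuscule (ω : V) : Prop := ω = D.hshort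

/-- The saturated set `P_ϑ` containing the (quasi-)minuscule weights. -/
def Ptheta : Set V :=
  {ν : V | ν ∈ D.weightLattice ∧ ∀ α ∈ D.R0, α ≠ ν → |⟪ν, coroot α⟫| ≤ 1}

/-- Half sum of the positive roots. -/
def rhoHalf : V := (2⁻¹ : ℝ) • ∑ α ∈ D.pos, α

/-- Half sum of the positive coroots. -/
def rhoVee : V := (2⁻¹ : ℝ) • ∑ α ∈ D.pos, coroot α

/-- `(α, r)` encodes an affine root. -/
def IsAffRoot (a : V × ℤ) : Prop := a.1 ∈ D.R0

/-- `(α, r)` encodes a positive affine root. -/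
def IsAffPos (a : V × ℤ) : Prop :=
  a.1 ∈ D.R0 ∧ (1 ≤ a.2 ∨ (a.2 = 0 ∧ a.1 ∈ D.pos))

/-- `(α, r)` encodes a negative affine root. -/
def IsAffNeg (a : V × ℤ) : Prop := D.IsAffPos (-a.1, -a.2)

/-- The simple affine roots `a₀ = -ϑ∨ + c`, `a_j = α_j∨`. -/
def aSimple (j : Fin (D.n + 1)) : V × ℤ :=
  Fin.cons (α := fun _ => V × ℤ) (-D.hshort, (1 : ℤ))
    (fun i => (D.simpleRoot i, (0 : ℤ))) j

/-- The reflections generating the finite Weyl group `W₀`. -/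
def W0Gens : Set (Equiv.Perm V) :=
  {e | ∃ α ∈ D.R0, ∀ x, e x = x - ⟪x, coroot α⟫ • α}

/-- The finite Weyl group `W₀`. -/
def W0 : Subgroup (Equiv.Perm V) := Subgroup.closure D.W0Gens

variable (c : ℝ)

/-- The affine reflections generating the affine Weyl group `W_R`. -/
def AffGens : Set (Equiv.Perm V) :=
  {e | ∃ a : V × ℤ, D.IsAffRoot a ∧ ∀ x, e x = sAff c a x}

/-- The affine Weyl group `W_R`. -/
def WR : Subgroup (Equiv.Perm V) := Subgroup.closure (D.AffGens c)

/-- The translations `t_{cλ}`, `λ ∈ P`. -/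
def TransGens : Set (Equiv.Perm V) :=
  {e | ∃ lam ∈ D.weightLattice, ∀ x : V, e x = x + c • lam}

/-- The extended affine Weyl group `W = W₀ ⋉ t(cP)`. -/
def Wext : Subgroup (Equiv.Perm V) :=
  Subgroup.closure (D.AffGens c ∪ D.TransGens c)

/-- The set `R(w) = R⁺ ∩ w⁻¹(R⁻)`. -/
def RW (w : Equiv.Perm V) : Set (V × ℤ) :=
  {a | D.IsAffPos a ∧ ∃ b : V × ℤ, D.IsAffNeg b ∧ mapsRoot c w a b}

/-- The length `ℓ(w) = #R(w)`. -/
def len (w : Equiv.Perm V) : ℕ := (D.RW c w).ncard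

/-- The closed fundamental alcove `A_c`. -/
def alcove : Set V := {x | ∀ a : V × ℤ, D.IsAffPos a → 0 ≤ aval c a x}

/-- `wmin x` is the unique shortest element of the affine Weyl group mapping `x` into
the fundamental alcove. -/
def IsWmin (wmin : V → Equiv.Perm V) : Prop :=
  ∀ x : V, wmin x ∈ D.WR c ∧ (wmin x) x ∈ D.alcove c ∧
    ∀ w ∈ D.WR c, w x ∈ D.alcove c → D.len c (wmin x) < D.len c w ∨ w = wmin x

/-- One step in the Bruhat order: `w < w s_a` whenever `ℓ(w) < ℓ(w s_a)`. -/
def bruhatStep (w w' : Equiv.Perm V) : Prop :=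
  ∃ a : V × ℤ, D.IsAffPos a ∧ ∃ e : Equiv.Perm V,
    (∀ x, e x = sAff c a x) ∧ w' = w * e ∧ D.len c w < D.len c w'

/-- The Bruhat order on the affine Weyl group. -/
def bruhatLE (w w' : Equiv.Perm V) : Prop :=
  Relation.ReflTransGen (D.bruhatStep c) w w'

/-- The partial order on `V`: `x ≤ y` iff `x₊ = y₊` and `w_x ≤ w_y` (Bruhat). -/
def vle (wmin : V → Equiv.Perm V) (x y : V) : Prop :=
  (wmin x) x = (wmin y) y ∧ D.bruhatLE c (wmin x) (wmin y)

/-- The interval `[x, y]` for the order `vle`. -/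
def vInterval (wmin : V → Equiv.Perm V) (x y : V) : Set V :=
  {z : V | D.vle c wmin x z ∧ D.vle c wmin z y}

/-- The partial order `⪯` on the weight lattice:
`μ ⪯ λ` iff `λ - μ ∈ Q` and `Conv [μ₊, μ] ⊆ Conv [λ₊, λ]`. -/
def pleq (wmin : V → Equiv.Perm V) (μ lam : V) : Prop :=
  lam - μ ∈ D.rootLattice ∧
    convexHull ℝ (D.vInterval c wmin ((wmin μ) μ) μ)
      ⊆ convexHull ℝ (D.vInterval c wmin ((wmin lam) lam) lam)

section Ops

variable {R : Type*} [Field R]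

/-- `τ` is a multiplicity function: nonvanishing on affine roots, and invariant
under the (extended affine) Weyl group action on the affine roots. -/
def IsMultiplicity (τ : V × ℤ → R) : Prop :=
  (∀ a : V × ℤ, D.IsAffRoot a → τ a ≠ 0) ∧
    ∀ w ∈ D.Wext c, ∀ a b : V × ℤ, D.IsAffRoot a → D.IsAffRoot b →
      mapsRoot c w a b → τ a = τ b

/-- `τ_w = ∏_{a ∈ R(w)} τ_a`. -/
def tauw (τ : V × ℤ → R) (w : Equiv.Perm V) : R := ∏ᶠ a ∈ D.RW c w, τ a

/-- `τ₀`, the multiplicity of the affine simple root `a₀`. -/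
def tauZero (τ : V × ℤ → R) : R := τ (-D.hshort, (1 : ℤ))

/-- The operator `I_{j₁} ∘ ⋯ ∘ I_{jℓ}` attached to a word in the simple reflections. -/
def wordOp (τ : V × ℤ → R) (l : List (Fin (D.n + 1))) : (V → R) → V → R :=
  (l.map fun j => Iop c τ (D.aSimple j)).foldr (· ∘ ·) id

/-- `l` is a reduced word for `w`, i.e. `w = s_{j₁} ∘ ⋯ ∘ s_{jℓ}` with `ℓ = ℓ(w)`. -/
def IsReducedWord (w : Equiv.Perm V) (l : List (Fin (D.n + 1))) : Prop :=
  l.length = D.len c w ∧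
    ∀ x : V, w x = ((l.map fun j => sAff c (D.aSimple j)).foldr (· ∘ ·) id) x

/-- `e∨_τ(η) = ∏_{α ∈ R₀⁺} τ_{α∨}^{⟨η,α∨⟩}`. -/
def etau (τ : V × ℤ → R) (η : V) : R :=
  ∏ α ∈ D.pos, τ (α, (0 : ℤ)) ^ ⌊⟪η, coroot α⟫⌋

/-- `h∨_τ = τ₀² e∨_τ(ϑ)`. -/
def hvee (τ : V × ℤ → R) : R := D.tauZero τ ^ 2 * D.etau τ D.hshort

/-- `θ(μ) = #{b ∈ R(w_μ) : b(μ) = -2}`. -/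
def theta (wmin : V → Equiv.Perm V) (μ : V) : ℕ :=
  {b : V × ℤ | b ∈ D.RW c (wmin μ) ∧ aval c b μ = -2}.ncard

/-- The coefficient `c_{λ,η} = θ(λ-η) e∨_τ(η) (h∨_τ)^{-sign⟨λ,η∨⟩}`. -/
def ccoef (τ : V × ℤ → R) (wmin : V → Equiv.Perm V) (lam η : V) : R :=
  (D.theta c wmin (lam - η) : R) * D.etau τ η *
    D.hvee τ ^ (-sgnZ ⟪lam, coroot η⟫)

/-- The coefficient `a_{λ,ν} = τ_{w_{w_λ(λ-ν)}} τ_{w_{w_λ(λ-ν)} w_λ} τ_{w_λ}⁻¹`. -/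
def acoef (τ : V × ℤ → R) (wmin : V → Equiv.Perm V) (lam ν : V) : R :=
  D.tauw c τ (wmin ((wmin lam) (lam - ν))) *
    D.tauw c τ (wmin ((wmin lam) (lam - ν)) * wmin lam) *
    (D.tauw c τ (wmin lam))⁻¹

/-- The coefficient `b_{λ,ν}`. -/
def bcoef (τ : V × ℤ → R) (wmin : V → Equiv.Perm V) (lam ν : V) : R :=
  if (wmin (lam - ν)) (lam - ν) = (wmin lam) lam then
    D.tauw c τ (wmin ((wmin lam) (lam - ν))) ^ 2 *
      (if D.IsAffNeg (ν, ⌊(1 - ⟪lam, coroot ν⟫) / c⌋) then 1 else 0)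
  else D.ccoef c τ wmin ((wmin lam) lam) (linPart (wmin lam) ν)

/-- The intertwining operator `(𝒥f)(λ) = τ_{w_λ}⁻¹ (I_{w_λ} f)(λ₊)`, where `Iw` assigns
to each `w_λ` the composite of integral-reflection operators along a reduced word. -/
def Jcal (τ : V × ℤ → R) (wmin : V → Equiv.Perm V)
    (Iw : Equiv.Perm V → (V → R) → V → R) (f : V → R) (x : V) : R :=
  (D.tauw c τ (wmin x))⁻¹ * Iw (wmin x) f ((wmin x) x)

end Ops

/-- The Yang–Yang type Morse function `𝒱_μ`. -/
def morse (t : V → ℝ) (μ ξ : V) : ℝ :=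
  (c / 2) * ⟪ξ, ξ⟫ - 2 * Real.pi * ⟪D.rhoVee + μ, ξ⟫ +
    ∑ α ∈ D.pos, (2 / ⟪α, α⟫) * ∫ x in (0:ℝ)..(⟪ξ, α⟫), mvfun (t α) x

/-- The critical equation `cξ + ∑_{α>0} v_α(⟨ξ,α⟩) α∨ = 2π(ρ∨+μ)`. -/
def criticalEq (t : V → ℝ) (μ ξ : V) : Prop :=
  c • ξ + ∑ α ∈ D.pos, mvfun (t α) ⟪ξ, α⟫ • coroot α
    = (2 * Real.pi) • (D.rhoVee + μ)

/-- The Hessian bilinear form `H_{η,ζ}(ξ)`. -/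
def hessForm (t : V → ℝ) (ξ η ζ : V) : ℝ :=
  c * ⟪η, ζ⟫ + ∑ α ∈ D.R0,
    (1 - t α ^ 2) * ⟪η, α⟫ * ⟪ζ, α⟫ /
      (⟪α, α⟫ * (1 - 2 * t α * Real.cos ⟪ξ, α⟫ + t α ^ 2))

/-- `κ_± = (2/n) ∑_{α>0} (1-t_α²)/(1 ± |t_α|)²`; here `s = ±1`. -/
def kappaPM (t : V → ℝ) (s : ℝ) : ℝ :=
  (2 / (D.n : ℝ)) * ∑ α ∈ D.pos, (1 - t α ^ 2) / (1 + s * |t α|) ^ 2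

end RootSystemData

open RootSystemData in
/-- The operator `G_{j,ν}` appearing in the cross relation of the double affine Hecke
algebra at critical level (the terminating geometric series `(t_ν - t_{s_j′ν})/(1 - t_{-α_j})`). -/
def Gop {V : Type*} [NormedAddCommGroup V] [InnerProductSpace ℝ V]
    (D : RootSystemData V) (c : ℝ) (j : Fin (D.n + 1)) (ν : V) (f : V → ℂ) (x : V) : ℂ :=
  if 0 < ⌊⟪ν, coroot (D.aSimple j).1⟫⌋ then
    ∑ k ∈ Finset.Ico (0 : ℤ) ⌊⟪ν, coroot (D.aSimple j).1⟫⌋, f (x - ν + k • (D.aSimple j).1)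
  else if ⌊⟪ν, coroot (D.aSimple j).1⟫⌋ = 0 then 0
  else - ∑ k ∈ Finset.Icc (1 : ℤ) (-⌊⟪ν, coroot (D.aSimple j).1⟫⌋),
        f (x - ν - k • (D.aSimple j).1)

set_option linter.all false
section Rank2
variable {K : Type*} [Field K]

/-- The coefficient `c(X) = (tX - t⁻¹)/(1-X)`. -/
def cc (t X : K) : K := (t*X - t⁻¹)/(1-X)

theorem cc_inv (t X : K) (hX : X ≠ 0) (h1 : 1 - X ≠ 0) (ht : t ≠ 0) :
    cc t X⁻¹ = -(t+t⁻¹) - cc t X := by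
  have h2 : X - 1 ≠ 0 := fun h => h1 (by linear_combination -h)
  have h3 : 1 - X⁻¹ ≠ 0 := by
    intro h
    apply h2
    field_simp at h
    simpa using h
  unfold cc
  rw [div_eq_iff h3, sub_mul, div_mul_eq_mul_div, eq_sub_iff_add_eq, ← eq_sub_iff_add_eq', div_eq_iff h1]
  field_simp
  ring

/-- The operator `T - t`. -/
def ee (s : K →+* K) (p : K) (g : K) : K := p * (g - s g)

theorem hecke2 (e1 e2 : K → K) (t1 t2 : K)
    (h1 : ∀ x y, e1 (x + y) = e1 x + e1 y) (h2 : ∀ x y, e2 (x + y) = e2 x + e2 y)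
    (m1 : ∀ x, e1 (t2 * x) = t2 * e1 x) (m2 : ∀ x, e2 (t1 * x) = t1 * e2 x) (g : K)
    (hU : e1 (e2 g) = e2 (e1 g)) (T1 T2 : K → K)
    (hT1 : ∀ g, T1 g = t1 * g + e1 g) (hT2 : ∀ g, T2 g = t2 * g + e2 g) :
    T1 (T2 g) = T2 (T1 g) := by
  simp only [hT1, hT2, h1, h2, m1, m2]
  linear_combination hU

theorem hecke3 (e1 e2 : K → K) (t : K) (ht : t ≠ 0)
    (h1 : ∀ x y, e1 (x + y) = e1 x + e1 y) (h2 : ∀ x y, e2 (x + y) = e2 x + e2 y)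
    (m1 : ∀ x, e1 (t * x) = t * e1 x) (m2 : ∀ x, e2 (t * x) = t * e2 x)
    (q1 : ∀ x, e1 (e1 x) = -(t+t⁻¹) * e1 x) (q2 : ∀ x, e2 (e2 x) = -(t+t⁻¹) * e2 x)
    (g : K)
    (hU : e1 (e2 (e1 g)) - e1 g = e2 (e1 (e2 g)) - e2 g) (T1 T2 : K → K)
    (hT1 : ∀ g, T1 g = t * g + e1 g) (hT2 : ∀ g, T2 g = t * g + e2 g) :
    T1 (T2 (T1 g)) = T2 (T1 (T2 g)) := by
  simp only [hT1, hT2, h1, h2, m1, m2, q1, q2]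
  linear_combination (norm := skip) hU
  field_simp
  ring

theorem hecke4 (e1 e2 : K → K) (t1 t2 k1 k2 : K) (ht1 : t1 ≠ 0) (ht2 : t2 ≠ 0)
    (hk1 : k1 = t1 + t1⁻¹) (hk2 : k2 = t2 + t2⁻¹)
    (h1 : ∀ x y, e1 (x + y) = e1 x + e1 y) (h2 : ∀ x y, e2 (x + y) = e2 x + e2 y)
    (m1 : ∀ x, e1 (t1 * x) = t1 * e1 x) (m2 : ∀ x, e2 (t1 * x) = t1 * e2 x)
    (m3 : ∀ x, e1 (t2 * x) = t2 * e1 x) (m4 : ∀ x, e2 (t2 * x) = t2 * e2 x)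
    (m5 : ∀ x, e1 (-k2 * x) = -k2 * e1 x) (m6 : ∀ x, e2 (-k1 * x) = -k1 * e2 x)
    (m7 : ∀ x, e1 (-k1 * x) = -k1 * e1 x) (m8 : ∀ x, e2 (-k2 * x) = -k2 * e2 x)
    (q1 : ∀ x, e1 (e1 x) = -k1 * e1 x) (q2 : ∀ x, e2 (e2 x) = -k2 * e2 x)
    (g : K)
    (hU : e1 (e2 (e1 (e2 g))) - (t1/t2+t2/t1) * e1 (e2 g)
      = e2 (e1 (e2 (e1 g))) - (t1/t2+t2/t1) * e2 (e1 g)) (T1 T2 : K → K)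
    (hT1 : ∀ g, T1 g = t1 * g + e1 g) (hT2 : ∀ g, T2 g = t2 * g + e2 g) :
    T1 (T2 (T1 (T2 g))) = T2 (T1 (T2 (T1 g))) := by
  simp only [hT1, hT2, h1, h2, m1, m2, m3, m4, m5, m6, m7, m8, q1, q2]
  linear_combination (norm := skip) hU
  subst hk1 hk2
  field_simp
  ring

set_option maxHeartbeats 2000000 in
theorem hecke6 (e1 e2 : K → K) (t1 t2 k1 k2 : K) (ht1 : t1 ≠ 0) (ht2 : t2 ≠ 0)
    (hk1 : k1 = t1 + t1⁻¹) (hk2 : k2 = t2 + t2⁻¹)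
    (h1 : ∀ x y, e1 (x + y) = e1 x + e1 y) (h2 : ∀ x y, e2 (x + y) = e2 x + e2 y)
    (m1 : ∀ x, e1 (t1 * x) = t1 * e1 x) (m2 : ∀ x, e2 (t1 * x) = t1 * e2 x)
    (m3 : ∀ x, e1 (t2 * x) = t2 * e1 x) (m4 : ∀ x, e2 (t2 * x) = t2 * e2 x)
    (m5 : ∀ x, e1 (-k2 * x) = -k2 * e1 x) (m6 : ∀ x, e2 (-k1 * x) = -k1 * e2 x)
    (m7 : ∀ x, e1 (-k1 * x) = -k1 * e1 x) (m8 : ∀ x, e2 (-k2 * x) = -k2 * e2 x)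
    (q1 : ∀ x, e1 (e1 x) = -k1 * e1 x) (q2 : ∀ x, e2 (e2 x) = -k2 * e2 x)
    (g : K)
    (hU : e1 (e2 (e1 (e2 (e1 (e2 g))))) - 2 * (t1/t2+t2/t1) * e1 (e2 (e1 (e2 g)))
        + ((t1/t2+t2/t1)^2 - 1) * e1 (e2 g)
      = e2 (e1 (e2 (e1 (e2 (e1 g))))) - 2 * (t1/t2+t2/t1) * e2 (e1 (e2 (e1 g)))
        + ((t1/t2+t2/t1)^2 - 1) * e2 (e1 g)) (T1 T2 : K → K)
    (hT1 : ∀ g, T1 g = t1 * g + e1 g) (hT2 : ∀ g, T2 g = t2 * g + e2 g) :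
    T1 (T2 (T1 (T2 (T1 (T2 g))))) = T2 (T1 (T2 (T1 (T2 (T1 g))))) := by
  simp only [hT1, hT2, h1, h2, m1, m2, m3, m4, m5, m6, m7, m8, q1, q2]
  linear_combination (norm := skip) hU
  subst hk1 hk2
  field_simp
  ring

theorem U3 (s1 s2 : K →+* K) (p1 p2 p3 k : K) (g : K)
    (i1 : ∀ x, s1 (s1 x) = x) (i2 : ∀ x, s2 (s2 x) = x)
    (a1 : s1 p1 = -k - p1) (a2 : s1 p2 = p3) (a3 : s1 p3 = p2)
    (b1 : s2 p1 = p3) (b2 : s2 p2 = -k - p2) (b3 : s2 p3 = p1)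
    (l1 : s1 k = k)
    (ha : p1 * p2 + p3 * (-k - p1) - 1 = p2 * p3) :
    ee s1 p1 (ee s2 p2 (ee s1 p1 g)) - ee s1 p1 g = p1*p2*p3*
      (g - s1 g - s2 g + s1 (s2 g) + s2 (s1 g) - s1 (s2 (s1 g))) := by
  have ha' := congrArg s1 ha
  simp only [map_add, map_mul, map_sub, map_one, map_neg, a1, a2, a3, b1, b2, b3, l1] at ha'
  simp only [ee, map_add, map_mul, map_sub, map_one, map_neg, a1, a2, a3, b1, b2, b3, l1, i1, i2]
  linear_combination p1 * ha * g - p1 * ha' * (s1 g)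

theorem U4 (s1 s2 : K →+* K) (p1 p2 q1 q2 k1 k2 r : K) (g : K)
    (i1 : ∀ x, s1 (s1 x) = x) (i2 : ∀ x, s2 (s2 x) = x)
    (a1 : s1 p1 = -k1 - p1) (a2 : s1 p2 = p2) (a3 : s1 q1 = q2) (a4 : s1 q2 = q1)
    (b1 : s2 p1 = p2) (b2 : s2 p2 = p1) (b3 : s2 q1 = -k2 - q1) (b4 : s2 q2 = q2)
    (l1 : s1 k1 = k1) (l2 : s1 k2 = k2) (l3 : s1 r = r)
    (ha : p1*q1 + p2*(-k2 - q1) + q2*(-k1 - p1) - r = p2*q2) :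
    ee s1 p1 (ee s2 q1 (ee s1 p1 (ee s2 q1 g))) - r * ee s1 p1 (ee s2 q1 g) = p1*p2*q1*q2*
      (g - s1 g - s2 g + s1 (s2 g) + s2 (s1 g) - s1 (s2 (s1 g)) - s2 (s1 (s2 g))
        + s1 (s2 (s1 (s2 g)))) := by
  have ha' := congrArg s1 ha
  simp only [map_add, map_mul, map_sub, map_one, map_neg, a1, a2, a3, a4, b1, b2, b3, b4, l1, l2, l3] at ha'
  simp only [ee, map_add, map_mul, map_sub, map_one, map_neg, a1, a2, a3, a4, b1, b2, b3, b4, l1, l2, l3, i1, i2]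
  linear_combination p1 * q1 * ha * (g - s2 g) - p1 * q2 * ha' * (s1 g - s1 (s2 g))

set_option maxHeartbeats 2000000 in
theorem U6 (s1 s2 : K →+* K) (p1 p2 p3 q1 q2 q3 k1 k2 r : K) (g : K)
    (i1 : ∀ x, s1 (s1 x) = x) (i2 : ∀ x, s2 (s2 x) = x)
    (a1 : s1 p1 = -k1 - p1) (a2 : s1 p2 = p3) (a3 : s1 p3 = p2)
    (a4 : s1 q1 = q2) (a5 : s1 q2 = q1) (a6 : s1 q3 = q3)
    (b1 : s2 p1 = p2) (b2 : s2 p2 = p1) (b3 : s2 p3 = p3)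
    (b4 : s2 q1 = -k2 - q1) (b5 : s2 q2 = q3) (b6 : s2 q3 = q2)
    (l1 : s1 k1 = k1) (l2 : s1 k2 = k2) (l3 : s1 r = r)
    (l4 : s2 k1 = k1) (l5 : s2 k2 = k2)
    (ha : p1*q1 + p2*(-k2 - q1) + q3*(-k1 - p2) + p3*(-k2 - q3) + q2*(-k1 - p1) -2*r = p3*q2)
    (hb : p1*q1*p1*q1 + p1*q1*p2*(-k2 - q1) + p1*q2*(-k1 - p1)*q1 + p2*(-k2 - q1)*p2*(-k2 - q1) + p2*(-k2 - q1)*p1*q1 + p2*q3*(-k1 - p2)*(-k2 - q1) + q2*(-k1 - p1)*q2*(-k1 - p1) + q2*(-k1 - p1)*p1*q1 + q2*(-k1 - p1)*p2*(-k2 - q1) + q2*p3*(-k2 - q2)*(-k1 - p1) + p1*q1 * (-2*r) + p2*(-k2 - q1) * (-2*r) + q2*(-k1 - p1) * (-2*r) + (r^2-1)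
      = p2*p3*q2*q3) :
    ee s1 p1 (ee s2 q1 (ee s1 p1 (ee s2 q1 (ee s1 p1 (ee s2 q1 g)))))
     - 2 * r * ee s1 p1 (ee s2 q1 (ee s1 p1 (ee s2 q1 g)))
     + (r^2 - 1) * ee s1 p1 (ee s2 q1 g) = p1*p2*p3*q1*q2*q3*
      (g - s1 g - s2 g + s1 (s2 g) + s2 (s1 g) - s1 (s2 (s1 g)) - s2 (s1 (s2 g))
        + s1 (s2 (s1 (s2 g))) + s2 (s1 (s2 (s1 g))) - s1 (s2 (s1 (s2 (s1 g))))
        - s2 (s1 (s2 (s1 (s2 g)))) + s1 (s2 (s1 (s2 (s1 (s2 g)))))) := by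
  have ha' := congrArg s1 ha
  have hb' := congrArg s1 hb
  simp only [map_add, map_mul, map_sub, map_one, map_neg, map_pow, map_ofNat, a1, a2, a3, a4, a5, a6, b1, b2, b3, b4, b5, b6, l1, l2, l3] at ha' hb'
  simp only [ee, map_add, map_mul, map_sub, map_one, map_neg, a1, a2, a3, a4, a5, a6, b1, b2, b3, b4, b5, b6, l1, l2, l3, l4, l5, i1, i2]
  linear_combination p1 * q1 * hb * (g - s2 g) - p1 * q2 * hb' * (s1 g - s1 (s2 g))
    + p1 * q1 * p2 * q3 * ha * (s2 (s1 g) - s2 (s1 (s2 g)))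
    - p1 * q2 * p3 * q3 * ha' * (s1 (s2 (s1 g)) - s1 (s2 (s1 (s2 g))))

set_option maxHeartbeats 4000000 in
theorem g2a (s t X Y p1 p2 p3 q1 q2 q3 k1 k2 r: K) (hs : s ≠ 0) (ht : t ≠ 0)
  (h1 : 1-X ≠ 0) (h2 : 1-X*Y ≠ 0) (h3 : 1 - X^2*Y ≠ 0) (h4 : 1-Y ≠ 0) (h5 : 1-X^3*Y ≠ 0) (h6 : 1 - X^3*Y^2 ≠ 0)
  (e1 : p1 = cc s X) (e2 : p2 = cc s (X*Y)) (e3 : p3 = cc s (X^2*Y))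
  (f1 : q1 = cc t Y) (f2 : q2 = cc t (X^3*Y)) (f3 : q3 = cc t (X^3*Y^2))
  (hk1 : k1 = s+s⁻¹) (hk2 : k2 = t+t⁻¹) (hr : r = s/t+t/s) :
  p1*q1 + p2*(-k2 - q1) + q3*(-k1 - p2) + p3*(-k2 - q3) + q2*(-k1 - p1) -2*r = p3*q2 := by
  subst hk1 hk2 hr e1 e2 e3 f1 f2 f3
  unfold cc
  field_simp
  ring

set_option maxHeartbeats 4000000 in
theorem g2b (s t X Y p1 p2 p3 q1 q2 q3 k1 k2 r: K) (hs : s ≠ 0) (ht : t ≠ 0)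
  (h1 : 1-X ≠ 0) (h2 : 1-X*Y ≠ 0) (h3 : 1 - X^2*Y ≠ 0) (h4 : 1-Y ≠ 0) (h5 : 1-X^3*Y ≠ 0) (h6 : 1 - X^3*Y^2 ≠ 0)
  (e1 : p1 = cc s X) (e2 : p2 = cc s (X*Y)) (e3 : p3 = cc s (X^2*Y))
  (f1 : q1 = cc t Y) (f2 : q2 = cc t (X^3*Y)) (f3 : q3 = cc t (X^3*Y^2))
  (hk1 : k1 = s+s⁻¹) (hk2 : k2 = t+t⁻¹) (hr : r = s/t+t/s) :
  p1*q1*p1*q1 + p1*q1*p2*(-k2 - q1) + p1*q2*(-k1 - p1)*q1 + p2*(-k2 - q1)*p2*(-k2 - q1) + p2*(-k2 - q1)*p1*q1 + p2*q3*(-k1 - p2)*(-k2 - q1) + q2*(-k1 - p1)*q2*(-k1 - p1) + q2*(-k1 - p1)*p1*q1 + q2*(-k1 - p1)*p2*(-k2 - q1) + q2*p3*(-k2 - q2)*(-k1 - p1) + p1*q1 * (-2*r) + p2*(-k2 - q1) * (-2*r) + q2*(-k1 - p1) * (-2*r) + (r^2-1) = p2*p3*q2*q3 := by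
  subst hk1 hk2 hr e1 e2 e3 f1 f2 f3
  unfold cc
  field_simp
  ring

set_option maxHeartbeats 4000000 in
theorem g2a2 (s t X Y p1 p2 p3 q1 q2 q3 k1 k2 r: K) (hs : s ≠ 0) (ht : t ≠ 0)
  (h1 : 1-X ≠ 0) (h2 : 1-X*Y ≠ 0) (h3 : 1 - X^2*Y ≠ 0) (h4 : 1-Y ≠ 0) (h5 : 1-X^3*Y ≠ 0) (h6 : 1 - X^3*Y^2 ≠ 0)
  (e1 : p1 = cc s X) (e2 : p2 = cc s (X*Y)) (e3 : p3 = cc s (X^2*Y))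
  (f1 : q1 = cc t Y) (f2 : q2 = cc t (X^3*Y)) (f3 : q3 = cc t (X^3*Y^2))
  (hk1 : k1 = s+s⁻¹) (hk2 : k2 = t+t⁻¹) (hr : r = s/t+t/s) :
  p1*q1 + q2*(-k1 - p1) + p3*(-k2 - q2) + q3*(-k1 - p3) + p2*(-k2 - q1) -2*r = q3*p2 := by
  subst hk1 hk2 hr e1 e2 e3 f1 f2 f3
  unfold cc
  field_simp
  ring

set_option maxHeartbeats 4000000 in
theorem g2b2 (s t X Y p1 p2 p3 q1 q2 q3 k1 k2 r: K) (hs : s ≠ 0) (ht : t ≠ 0)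
  (h1 : 1-X ≠ 0) (h2 : 1-X*Y ≠ 0) (h3 : 1 - X^2*Y ≠ 0) (h4 : 1-Y ≠ 0) (h5 : 1-X^3*Y ≠ 0) (h6 : 1 - X^3*Y^2 ≠ 0)
  (e1 : p1 = cc s X) (e2 : p2 = cc s (X*Y)) (e3 : p3 = cc s (X^2*Y))
  (f1 : q1 = cc t Y) (f2 : q2 = cc t (X^3*Y)) (f3 : q3 = cc t (X^3*Y^2))
  (hk1 : k1 = s+s⁻¹) (hk2 : k2 = t+t⁻¹) (hr : r = s/t+t/s) :
  p1*q1*p1*q1 + q1*p1*q2*(-k1 - p1) + q1*p2*(-k2 - q1)*p1 + q2*(-k1 - p1)*q2*(-k1 - p1) + q2*(-k1 - p1)*q1*p1 + q2*p3*(-k2 - q2)*(-k1 - p1) + p2*(-k2 - q1)*p2*(-k2 - q1) + p2*(-k2 - q1)*q1*p1 + p2*(-k2 - q1)*q2*(-k1 - p1) + p2*q3*(-k1 - p2)*(-k2 - q1) + q1*p1 * (-2*r) + q2*(-k1 - p1) * (-2*r) + p2*(-k2 - q1) * (-2*r) + (r^2-1) = q2*q3*p2*p3 := by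
  subst hk1 hk2 hr e1 e2 e3 f1 f2 f3
  unfold cc
  field_simp
  ring

set_option maxHeartbeats 4000000 in
theorem b2a (s t X Y p1 p2 q1 q2 k1 k2 r: K) (hs : s ≠ 0) (ht : t ≠ 0)
  (h1 : 1-X ≠ 0) (h2 : 1-X*Y ≠ 0) (h4 : 1-Y ≠ 0) (h5 : 1-X^2*Y ≠ 0)
  (e1 : p1 = cc s X) (e2 : p2 = cc s (X*Y))
  (f1 : q1 = cc t Y) (f2 : q2 = cc t (X^2*Y))
  (hk1 : k1 = s+s⁻¹) (hk2 : k2 = t+t⁻¹) (hr : r = s/t+t/s) :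
  p1*q1 + p2*(-k2 - q1) + q2*(-k1 - p1) - r = p2*q2 := by
  subst hk1 hk2 hr e1 e2 f1 f2
  unfold cc
  field_simp
  ring

set_option maxHeartbeats 4000000 in
theorem b2a2 (s t X Y p1 p2 q1 q2 k1 k2 r: K) (hs : s ≠ 0) (ht : t ≠ 0)
  (h1 : 1-X ≠ 0) (h2 : 1-X*Y ≠ 0) (h4 : 1-Y ≠ 0) (h5 : 1-X^2*Y ≠ 0)
  (e1 : p1 = cc s X) (e2 : p2 = cc s (X*Y))
  (f1 : q1 = cc t Y) (f2 : q2 = cc t (X^2*Y))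
  (hk1 : k1 = s+s⁻¹) (hk2 : k2 = t+t⁻¹) (hr : r = s/t+t/s) :
  p1*q1 + q2*(-k1 - p1) + p2*(-k2 - q1) - r = q2*p2 := by
  subst hk1 hk2 hr e1 e2 f1 f2
  unfold cc
  field_simp
  ring

theorem a2a (t X Y p1 p2 p3 k : K) (ht : t ≠ 0)
  (h1 : 1-X ≠ 0) (h2 : 1-X*Y ≠ 0) (h4 : 1-Y ≠ 0)
  (e1 : p1 = cc t X) (e2 : p2 = cc t Y) (e3 : p3 = cc t (X*Y)) (hk : k = t+t⁻¹) :
  p1 * p2 + p3 * (-k - p1) - 1 = p2 * p3 := by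
  subst hk e1 e2 e3
  unfold cc
  field_simp
  ring

theorem a2a2 (t X Y p1 p2 p3 k : K) (ht : t ≠ 0)
  (h1 : 1-X ≠ 0) (h2 : 1-X*Y ≠ 0) (h4 : 1-Y ≠ 0)
  (e1 : p1 = cc t X) (e2 : p2 = cc t Y) (e3 : p3 = cc t (X*Y)) (hk : k = t+t⁻¹) :
  p1 * p2 + p3 * (-k - p2) - 1 = p1 * p3 := by
  subst hk e1 e2 e3
  unfold cc
  field_simp
  ring

theorem map_cc (s : K →+* K) (t X : K) (h : s t = t) : s (cc t X) = cc t (s X) := by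
  simp [cc, map_div₀, map_sub, map_mul, map_inv₀, h]

/-- The Demazure-Lusztig operator. -/
def TT (s : K →+* K) (t X : K) (g : K) : K :=
  t * s g + (t - t⁻¹) * ((g - s g) / (1 - X))

theorem TT_eq (s : K →+* K) (t X : K) (h1 : 1 - X ≠ 0) (ht : t ≠ 0) (g : K) :
    TT s t X g = t * g + ee s (cc t X) g := by
  unfold TT ee cc
  field_simp
  ring

theorem ee_add (s : K →+* K) (p x y : K) : ee s p (x + y) = ee s p x + ee s p y := by
  simp [ee]; ring

theorem ee_const (s : K →+* K) (p t : K) (h : s t = t) (x : K) :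
    ee s p (t * x) = t * ee s p x := by
  simp [ee, h]; ring

theorem ee_sq (s : K →+* K) (p k : K) (i : ∀ x, s (s x) = x) (h : s p = -k - p) (x : K) :
    ee s p (ee s p x) = -k * ee s p x := by
  simp [ee, h, i]; ring

theorem braidK2 (s1 s2 : K →+* K) (t1 t2 X Y : K) (ht1 : t1 ≠ 0) (ht2 : t2 ≠ 0)
    (c11 : s1 t1 = t1) (c12 : s1 t2 = t2) (c21 : s2 t1 = t1) (c22 : s2 t2 = t2)
    (x1 : s1 Y = Y) (y1 : s2 X = X)
    (h1 : 1 - X ≠ 0) (h4 : 1 - Y ≠ 0) 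
    (g : K) (hw : s1 (s2 g) = s2 (s1 g)) :
    TT s1 t1 X (TT s2 t2 Y g) = TT s2 t2 Y (TT s1 t1 X g) := by
  refine hecke2 (ee s1 (cc t1 X)) (ee s2 (cc t2 Y)) t1 t2 (ee_add _ _) (ee_add _ _)
    (ee_const _ _ _ c12) (ee_const _ _ _ c21) g ?_ _ _ (TT_eq _ _ _ h1 ht1) (TT_eq _ _ _ h4 ht2)
  simp only [ee, map_mul, map_sub, map_cc _ _ _ c12, map_cc _ _ _ c21, x1, y1, hw]
  ring

theorem braidK3 (s1 s2 : K →+* K) (t X Y : K) (ht : t ≠ 0) (hX : X ≠ 0) (hY : Y ≠ 0)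
    (i1 : ∀ x, s1 (s1 x) = x) (i2 : ∀ x, s2 (s2 x) = x)
    (c1 : s1 t = t) (c2 : s2 t = t)
    (x0 : s1 X = X⁻¹) (x1 : s1 Y = X * Y) (y0 : s2 Y = Y⁻¹) (y1 : s2 X = X * Y)
    (h1 : 1 - X ≠ 0) (h2 : 1 - X * Y ≠ 0) (h4 : 1 - Y ≠ 0)
    (g : K) (hw : s1 (s2 (s1 g)) = s2 (s1 (s2 g))) :
    TT s1 t X (TT s2 t Y (TT s1 t X g)) = TT s2 t Y (TT s1 t X (TT s2 t Y g)) := by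
  have a1 : s1 (cc t X) = -(t+t⁻¹) - cc t X := by rw [map_cc _ _ _ c1, x0, cc_inv _ _ hX h1 ht]
  have a2 : s1 (cc t Y) = cc t (X*Y) := by rw [map_cc _ _ _ c1, x1]
  have a3 : s1 (cc t (X*Y)) = cc t Y := by rw [← a2, i1]
  have b1 : s2 (cc t X) = cc t (X*Y) := by rw [map_cc _ _ _ c2, y1]
  have b2 : s2 (cc t Y) = -(t+t⁻¹) - cc t Y := by rw [map_cc _ _ _ c2, y0, cc_inv _ _ hY h4 ht]
  have b3 : s2 (cc t (X*Y)) = cc t X := by rw [← b1, i2]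
  have l1 : s1 (t+t⁻¹) = t+t⁻¹ := by simp [c1, map_inv₀]
  have l2 : s2 (t+t⁻¹) = t+t⁻¹ := by simp [c2, map_inv₀]
  refine hecke3 (ee s1 (cc t X)) (ee s2 (cc t Y)) t ht (ee_add _ _) (ee_add _ _)
    (ee_const _ _ _ c1) (ee_const _ _ _ c2) (ee_sq _ _ _ i1 a1) (ee_sq _ _ _ i2 b2) g ?_ _ _
    (TT_eq _ _ _ h1 ht) (TT_eq _ _ _ h4 ht)
  rw [U3 s1 s2 _ _ _ _ g i1 i2 a1 a2 a3 b1 b2 b3 l1 (a2a t X Y _ _ _ _ ht h1 h2 h4 rfl rfl rfl rfl),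
    U3 s2 s1 _ _ _ _ g i2 i1 b2 b1 b3 a2 a1 a3 l2
      (by linear_combination a2a2 t X Y _ _ _ _ ht h1 h2 h4 rfl rfl rfl rfl)]
  linear_combination (-(cc t X * cc t Y * cc t (X*Y))) * hw

theorem braidK4 (s1 s2 : K →+* K) (t1 t2 X Y : K) (ht1 : t1 ≠ 0) (ht2 : t2 ≠ 0)
    (hX : X ≠ 0) (hY : Y ≠ 0)
    (i1 : ∀ x, s1 (s1 x) = x) (i2 : ∀ x, s2 (s2 x) = x)
    (c11 : s1 t1 = t1) (c12 : s1 t2 = t2) (c21 : s2 t1 = t1) (c22 : s2 t2 = t2)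
    (x0 : s1 X = X⁻¹) (x1 : s1 Y = X^2 * Y) (y0 : s2 Y = Y⁻¹) (y1 : s2 X = X * Y)
    (h1 : 1 - X ≠ 0) (h2 : 1 - X * Y ≠ 0) (h4 : 1 - Y ≠ 0) (h5 : 1 - X^2 * Y ≠ 0)
    (g : K) (hw : s1 (s2 (s1 (s2 g))) = s2 (s1 (s2 (s1 g)))) :
    TT s1 t1 X (TT s2 t2 Y (TT s1 t1 X (TT s2 t2 Y g)))
     = TT s2 t2 Y (TT s1 t1 X (TT s2 t2 Y (TT s1 t1 X g))) := by
  have a1 : s1 (cc t1 X) = -(t1+t1⁻¹) - cc t1 X := by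
    rw [map_cc _ _ _ c11, x0, cc_inv _ _ hX h1 ht1]
  have a2 : s1 (cc t1 (X*Y)) = cc t1 (X*Y) := by
    rw [map_cc _ _ _ c11, map_mul, x0, x1]; congr 1; field_simp
  have a3 : s1 (cc t2 Y) = cc t2 (X^2*Y) := by rw [map_cc _ _ _ c12, x1]
  have a4 : s1 (cc t2 (X^2*Y)) = cc t2 Y := by rw [← a3, i1]
  have b1 : s2 (cc t1 X) = cc t1 (X*Y) := by rw [map_cc _ _ _ c21, y1]
  have b2 : s2 (cc t1 (X*Y)) = cc t1 X := by rw [← b1, i2]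
  have b3 : s2 (cc t2 Y) = -(t2+t2⁻¹) - cc t2 Y := by
    rw [map_cc _ _ _ c22, y0, cc_inv _ _ hY h4 ht2]
  have b4 : s2 (cc t2 (X^2*Y)) = cc t2 (X^2*Y) := by
    rw [map_cc _ _ _ c22, map_mul, map_pow, y0, y1]; congr 1; field_simp
  have l11 : s1 (t1+t1⁻¹) = t1+t1⁻¹ := by simp [c11, map_inv₀]
  have l12 : s1 (t2+t2⁻¹) = t2+t2⁻¹ := by simp [c12, map_inv₀]
  have l21 : s2 (t1+t1⁻¹) = t1+t1⁻¹ := by simp [c21, map_inv₀]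
  have l22 : s2 (t2+t2⁻¹) = t2+t2⁻¹ := by simp [c22, map_inv₀]
  have n11 : s1 (-(t1+t1⁻¹)) = -(t1+t1⁻¹) := by rw [map_neg, l11]
  have n12 : s1 (-(t2+t2⁻¹)) = -(t2+t2⁻¹) := by rw [map_neg, l12]
  have n21 : s2 (-(t1+t1⁻¹)) = -(t1+t1⁻¹) := by rw [map_neg, l21]
  have n22 : s2 (-(t2+t2⁻¹)) = -(t2+t2⁻¹) := by rw [map_neg, l22]
  have r1 : s1 (t1/t2+t2/t1) = t1/t2+t2/t1 := by simp [c11, c12, map_div₀]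
  have r2 : s2 (t1/t2+t2/t1) = t1/t2+t2/t1 := by simp [c21, c22, map_div₀]
  refine hecke4 (ee s1 (cc t1 X)) (ee s2 (cc t2 Y)) t1 t2 _ _ ht1 ht2 rfl rfl (ee_add _ _) (ee_add _ _)
    (ee_const _ _ _ c11) (ee_const _ _ _ c21) (ee_const _ _ _ c12) (ee_const _ _ _ c22)
    (ee_const _ _ _ n12) (ee_const _ _ _ n21) (ee_const _ _ _ n11) (ee_const _ _ _ n22)
    (ee_sq _ _ _ i1 a1) (ee_sq _ _ _ i2 b3) g ?_ _ _
    (TT_eq _ _ _ h1 ht1) (TT_eq _ _ _ h4 ht2)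
  rw [U4 s1 s2 _ _ _ _ _ _ _ g i1 i2 a1 a2 a3 a4 b1 b2 b3 b4 l11 l12 r1
      (b2a t1 t2 X Y _ _ _ _ _ _ _ ht1 ht2 h1 h2 h4 h5 rfl rfl rfl rfl rfl rfl rfl),
    U4 s2 s1 _ _ _ _ _ _ _ g i2 i1 b3 b4 b1 b2 a3 a4 a1 a2 l22 l21 r2
      (by linear_combination b2a2 t1 t2 X Y _ _ _ _ _ _ _ ht1 ht2 h1 h2 h4 h5 rfl rfl rfl rfl rfl rfl rfl)]
  linear_combination (cc t1 X * cc t1 (X*Y) * cc t2 Y * cc t2 (X^2*Y)) * hw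

theorem braidK6 (s1 s2 : K →+* K) (t1 t2 X Y : K) (ht1 : t1 ≠ 0) (ht2 : t2 ≠ 0)
    (hX : X ≠ 0) (hY : Y ≠ 0)
    (i1 : ∀ x, s1 (s1 x) = x) (i2 : ∀ x, s2 (s2 x) = x)
    (c11 : s1 t1 = t1) (c12 : s1 t2 = t2) (c21 : s2 t1 = t1) (c22 : s2 t2 = t2)
    (x0 : s1 X = X⁻¹) (x1 : s1 Y = X^3 * Y) (y0 : s2 Y = Y⁻¹) (y1 : s2 X = X * Y)
    (h1 : 1 - X ≠ 0) (h2 : 1 - X * Y ≠ 0) (h3 : 1 - X^2 * Y ≠ 0)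
    (h4 : 1 - Y ≠ 0) (h5 : 1 - X^3 * Y ≠ 0) (h6 : 1 - X^3 * Y^2 ≠ 0)
    (g : K) (hw : s1 (s2 (s1 (s2 (s1 (s2 g))))) = s2 (s1 (s2 (s1 (s2 (s1 g)))))) :
    TT s1 t1 X (TT s2 t2 Y (TT s1 t1 X (TT s2 t2 Y (TT s1 t1 X (TT s2 t2 Y g)))))
     = TT s2 t2 Y (TT s1 t1 X (TT s2 t2 Y (TT s1 t1 X (TT s2 t2 Y (TT s1 t1 X g))))) := by
  have a1 : s1 (cc t1 X) = -(t1+t1⁻¹) - cc t1 X := by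
    rw [map_cc _ _ _ c11, x0, cc_inv _ _ hX h1 ht1]
  have a2 : s1 (cc t1 (X*Y)) = cc t1 (X^2*Y) := by
    rw [map_cc _ _ _ c11, map_mul, x0, x1]; congr 1; field_simp
  have a3 : s1 (cc t1 (X^2*Y)) = cc t1 (X*Y) := by rw [← a2, i1]
  have a4 : s1 (cc t2 Y) = cc t2 (X^3*Y) := by rw [map_cc _ _ _ c12, x1]
  have a5 : s1 (cc t2 (X^3*Y)) = cc t2 Y := by rw [← a4, i1]
  have a6 : s1 (cc t2 (X^3*Y^2)) = cc t2 (X^3*Y^2) := by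
    rw [map_cc _ _ _ c12, map_mul, map_pow, map_pow, x0, x1]; congr 1; field_simp
  have b1 : s2 (cc t1 X) = cc t1 (X*Y) := by rw [map_cc _ _ _ c21, y1]
  have b2 : s2 (cc t1 (X*Y)) = cc t1 X := by rw [← b1, i2]
  have b3 : s2 (cc t1 (X^2*Y)) = cc t1 (X^2*Y) := by
    rw [map_cc _ _ _ c21, map_mul, map_pow, y0, y1]; congr 1; field_simp
  have b4 : s2 (cc t2 Y) = -(t2+t2⁻¹) - cc t2 Y := by
    rw [map_cc _ _ _ c22, y0, cc_inv _ _ hY h4 ht2]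
  have b5 : s2 (cc t2 (X^3*Y)) = cc t2 (X^3*Y^2) := by
    rw [map_cc _ _ _ c22, map_mul, map_pow, y0, y1]; congr 1; field_simp
  have b6 : s2 (cc t2 (X^3*Y^2)) = cc t2 (X^3*Y) := by rw [← b5, i2]
  have l11 : s1 (t1+t1⁻¹) = t1+t1⁻¹ := by simp [c11, map_inv₀]
  have l12 : s1 (t2+t2⁻¹) = t2+t2⁻¹ := by simp [c12, map_inv₀]
  have l21 : s2 (t1+t1⁻¹) = t1+t1⁻¹ := by simp [c21, map_inv₀]
  have l22 : s2 (t2+t2⁻¹) = t2+t2⁻¹ := by simp [c22, map_inv₀]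
  have n11 : s1 (-(t1+t1⁻¹)) = -(t1+t1⁻¹) := by rw [map_neg, l11]
  have n12 : s1 (-(t2+t2⁻¹)) = -(t2+t2⁻¹) := by rw [map_neg, l12]
  have n21 : s2 (-(t1+t1⁻¹)) = -(t1+t1⁻¹) := by rw [map_neg, l21]
  have n22 : s2 (-(t2+t2⁻¹)) = -(t2+t2⁻¹) := by rw [map_neg, l22]
  have r1 : s1 (t1/t2+t2/t1) = t1/t2+t2/t1 := by simp [c11, c12, map_div₀]
  have r2 : s2 (t1/t2+t2/t1) = t1/t2+t2/t1 := by simp [c21, c22, map_div₀]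
  refine hecke6 (ee s1 (cc t1 X)) (ee s2 (cc t2 Y)) t1 t2 _ _ ht1 ht2 rfl rfl (ee_add _ _) (ee_add _ _)
    (ee_const _ _ _ c11) (ee_const _ _ _ c21) (ee_const _ _ _ c12) (ee_const _ _ _ c22)
    (ee_const _ _ _ n12) (ee_const _ _ _ n21) (ee_const _ _ _ n11) (ee_const _ _ _ n22)
    (ee_sq _ _ _ i1 a1) (ee_sq _ _ _ i2 b4) g ?_ _ _
    (TT_eq _ _ _ h1 ht1) (TT_eq _ _ _ h4 ht2)
  rw [U6 s1 s2 _ _ _ _ _ _ _ _ _ g i1 i2 a1 a2 a3 a4 a5 a6 b1 b2 b3 b4 b5 b6 l11 l12 r1 l21 l22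
      (g2a t1 t2 X Y _ _ _ _ _ _ _ _ _ ht1 ht2 h1 h2 h3 h4 h5 h6 rfl rfl rfl rfl rfl rfl rfl rfl rfl)
      (g2b t1 t2 X Y _ _ _ _ _ _ _ _ _ ht1 ht2 h1 h2 h3 h4 h5 h6 rfl rfl rfl rfl rfl rfl rfl rfl rfl),
    U6 s2 s1 _ _ _ _ _ _ _ _ _ g i2 i1 b4 b5 b6 b1 b2 b3 a4 a5 a6 a1 a2 a3 l22 l21 r2 l12 l11
      (by linear_combination g2a2 t1 t2 X Y _ _ _ _ _ _ _ _ _ ht1 ht2 h1 h2 h3 h4 h5 h6 rfl rfl rfl rfl rfl rfl rfl rfl rfl)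
      (by linear_combination g2b2 t1 t2 X Y _ _ _ _ _ _ _ _ _ ht1 ht2 h1 h2 h3 h4 h5 h6 rfl rfl rfl rfl rfl rfl rfl rfl rfl)]
  linear_combination (cc t1 X * cc t1 (X*Y) * cc t1 (X^2*Y) * cc t2 Y * cc t2 (X^3*Y)
    * cc t2 (X^3*Y^2)) * hw

end Rank2

section AntiDiff
variable {M : Type*} [AddCommGroup M]

theorem exists_antidiff (F : ℤ → M) : ∃ Φ : ℤ → M, ∀ k, Φ (k+1) - Φ k = F k := by
  refine ⟨fun k => if 0 ≤ k then ∑ i ∈ Finset.range k.toNat, F i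
    else - ∑ i ∈ Finset.range (-k).toNat, F (-((i:ℤ)+1)), ?_⟩
  intro k
  rcases le_or_gt 0 k with hk | hk
  · obtain ⟨n, rfl⟩ := Int.eq_ofNat_of_zero_le hk
    have h2 : (0:ℤ) ≤ (n:ℤ) + 1 := by omega
    have h3 : ((n:ℤ)+1).toNat = n + 1 := by omega
    simp only [hk, h2, if_true, h3, Int.toNat_natCast, Finset.sum_range_succ]
    abel
  · obtain ⟨n, hn⟩ := Int.eq_ofNat_of_zero_le (show 0 ≤ -k - 1 by omega)
    have hk' : k = -((n:ℤ)+1) := by omega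
    subst hk'
    have h3 : (-(-((n:ℤ)+1))).toNat = n + 1 := by omega
    have h4 : ¬ (0 ≤ -((n:ℤ)+1)) := by omega
    rcases Nat.eq_zero_or_pos n with h0 | h0
    · subst h0
      simp
    · have h5 : ¬ (0 ≤ -((n:ℤ)+1)+1) := by omega
      have h6 : (-(-((n:ℤ)+1)+1)).toNat = n := by omega
      simp only [h4, h5, if_false, h3, h6, Finset.sum_range_succ]
      abel

theorem sum_Ico_antidiff (F Φ : ℤ → M) (h : ∀ k, Φ (k+1) - Φ k = F k) (n : ℕ) :
    ∑ k ∈ Finset.Ico (0:ℤ) n, F k = Φ n - Φ 0 := by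
  induction n with
  | zero => simp
  | succ n ih =>
    have : Finset.Ico (0:ℤ) ((n+1:ℕ):ℤ) = insert (n:ℤ) (Finset.Ico (0:ℤ) n) := by
      ext x; simp only [Finset.mem_Ico, Finset.mem_insert]; push_cast; omega
    rw [this, Finset.sum_insert (by simp), ih, ← h]
    push_cast
    abel

theorem sum_Icc_antidiff (F Φ : ℤ → M) (h : ∀ k, Φ (k+1) - Φ k = F k) (n : ℕ) :
    ∑ k ∈ Finset.Icc (1:ℤ) n, F (-k) = Φ 0 - Φ (-n) := by
  induction n with
  | zero => simp
  | succ n ih =>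
    have : Finset.Icc (1:ℤ) ((n+1:ℕ):ℤ) = insert ((n:ℤ)+1) (Finset.Icc (1:ℤ) n) := by
      ext x; simp only [Finset.mem_Icc, Finset.mem_insert]; push_cast; omega
    rw [this, Finset.sum_insert (by simp), ih, ← h]
    have : -((n:ℤ)+1)+1 = -n := by ring
    rw [this]
    push_cast
    abel

variable {V : Type*} [NormedAddCommGroup V] [InnerProductSpace ℝ V]

/-- `J_a` for functions with values in an abelian group. -/
def JG (c : ℝ) (a : V × ℤ) (f : V → M) (x : V) : M :=
  if 0 < aval c a x then
    - ∑ k ∈ Finset.Icc (1 : ℤ) ⌊aval c a x⌋, f (x - k • a.1)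
  else if aval c a x = 0 then 0
  else ∑ k ∈ Finset.Ico (0 : ℤ) (-⌊aval c a x⌋), f (x + k • a.1)

theorem JG_eq (c : ℝ) (a : V × ℤ) (f : V → M) (x : V) (p : ℤ) (hp : aval c a x = p)
    (Φ : ℤ → M) (h : ∀ k, Φ (k+1) - Φ k = f (x + k • a.1)) :
    JG c a f x = Φ (-p) - Φ 0 := by
  unfold JG
  rw [hp]
  simp only [Int.cast_pos, Int.cast_eq_zero, Int.floor_intCast]
  split_ifs with h1 h2
  · obtain ⟨n, rfl⟩ := Int.eq_ofNat_of_zero_le h1.le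
    have := sum_Icc_antidiff (fun k => f (x + k • a.1)) Φ h n
    simp only [neg_smul, ← sub_eq_add_neg] at this
    rw [this]; abel
  · subst h2; simp
  · obtain ⟨n, hn⟩ := Int.eq_ofNat_of_zero_le (show 0 ≤ -p by omega)
    rw [hn]
    exact sum_Ico_antidiff (fun k => f (x + k • a.1)) Φ h n

theorem Jop_eq {R : Type*} [Field R] (c : ℝ) (a : V × ℤ) (f : V → R) (x : V) (p : ℤ)
    (hp : aval c a x = p)
    (Φ : ℤ → R) (h : ∀ k, Φ (k+1) - Φ k = f (x + k • a.1)) :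
    Jop c a f x = Φ (-p) - Φ 0 := JG_eq c a f x p hp Φ h

theorem inner_coroot_self (α : V) (h : α ≠ 0) : ⟪α, coroot α⟫ = 2 := by
  have : ⟪α, α⟫ ≠ 0 := by simpa using h
  rw [coroot, real_inner_smul_right]
  field_simp

theorem aval_add_smul (c : ℝ) (a : V × ℤ) (x y : V) (k : ℝ) :
    aval c a (x + k • y) = aval c a x + k * ⟪y, coroot a.1⟫ := by
  unfold aval
  rw [inner_add_left, real_inner_smul_left]
  ring

theorem quad_rel (c : ℝ) (τ : V × ℤ → ℂ) (a : V × ℤ) (ha : a.1 ≠ 0) (hτ : τ a ≠ 0) (f : V → ℂ)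
    (x : V) (p : ℤ) (hp : aval c a x = p) :
    Iop c τ a (fun y => Iop c τ a f y + (τ a)⁻¹ * f y) x
      - τ a * (Iop c τ a f x + (τ a)⁻¹ * f x) = 0 := by
  set F : ℤ → ℂ := fun k => f (x + k • a.1) with hF
  obtain ⟨Φ, hΦ⟩ := exists_antidiff F
  obtain ⟨Ψ, hΨ⟩ := exists_antidiff Φ
  have hav : ∀ k : ℤ, aval c a (x + k • a.1) = ((p + 2 * k : ℤ) : ℝ) := by
    intro k
    rw [← Int.cast_smul_eq_zsmul ℝ, aval_add_smul, inner_coroot_self _ ha, hp]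
    push_cast; ring
  have hs : ∀ k : ℤ, sAff c a (x + k • a.1) = x + (-p-k) • a.1 := by
    intro k
    rw [sAff, hav, Int.cast_smul_eq_zsmul, add_sub_assoc, ← sub_smul]
    congr 2; ring
  have hI : ∀ k : ℤ, Iop c τ a f (x + k • a.1)
      = τ a * F (-p-k) + (τ a - (τ a)⁻¹) * (Φ (-p-k) - Φ k) := by
    intro k
    rw [Iop, hs, Jop_eq c a f _ _ (hav k) (fun i => Φ (k + i))]
    · simp only [add_zero, hF]
      congr 4; ring
    · intro i
      rw [← add_assoc, hΦ, hF]
      simp only [add_smul, add_assoc]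
  have hx : x = x + (0:ℤ) • a.1 := by simp
  have hsx : sAff c a x = x + (-p) • a.1 := by
    have := hs 0
    simpa using this
  have hIx : Iop c τ a f x = τ a * F (-p) + (τ a - (τ a)⁻¹) * (Φ (-p) - Φ 0) := by
    have := hI 0
    simpa using this
  have hIsx : Iop c τ a f (x + (-p) • a.1) = τ a * F 0 + (τ a - (τ a)⁻¹) * (Φ 0 - Φ (-p)) := by
    rw [hI]; simp
  rw [Iop, hsx, hIsx, hIx]
  rw [Jop_eq c a _ x p hp (fun k => -(τ a) * Φ (-p-k+1) + (τ a)⁻¹ * Φ k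
      + (τ a - (τ a)⁻¹) * (-Ψ (-p-k+1) - Ψ k))]
  · have e1 : f x = F 0 := by simp [hF]
    have e2 : f (x + (-p) • a.1) = F (-p) := rfl
    rw [e1, e2]
    simp only [sub_neg_eq_add, sub_zero]
    have e3 : (-p + p + 1 : ℤ) = 0 + 1 := by ring
    rw [e3]
    have g1 := hΦ 0
    have g2 := hΦ (-p)
    have g3 := hΨ 0
    have g4 := hΨ (-p)
    have u1 : Φ (0+1) = Φ 0 + F 0 := by linear_combination g1
    have u2 : Φ (-p+1) = Φ (-p) + F (-p) := by linear_combination g2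
    have u3 : Ψ (0+1) = Ψ 0 + Φ 0 := by linear_combination g3
    have u4 : Ψ (-p+1) = Ψ (-p) + Φ (-p) := by linear_combination g4
    rw [u1, u2, u3, u4]
    field_simp
    ring
  · intro k
    rw [hI]
    have e2 : f (x + k • a.1) = F k := rfl
    rw [e2]
    have e3 : -p - (k+1) + 1 = -p - k := by ring
    rw [e3]
    linear_combination (τ a) * hΦ (-p-k) + (τ a)⁻¹ * hΦ k + (τ a - (τ a)⁻¹) * (hΨ (-p-k) - hΨ k)

theorem cross_rel (c : ℝ) (τ : V × ℤ → ℂ) (a : V × ℤ) (ha : a.1 ≠ 0) (f : V → ℂ)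
    (x ν : V) (p n : ℤ) (hp : aval c a x = p) (hn : ⟪ν, coroot a.1⟫ = n) :
    Iop c τ a (fun y => f (y - ν)) x
        = Iop c τ a f (x - (ν - ⟪ν, coroot a.1⟫ • a.1))
          + (τ a - (τ a)⁻¹) * (if 0 < ⌊⟪ν, coroot a.1⟫⌋ then
    ∑ k ∈ Finset.Ico (0 : ℤ) ⌊⟪ν, coroot a.1⟫⌋, f (x - ν + k • a.1)
  else if ⌊⟪ν, coroot a.1⟫⌋ = 0 then 0
  else - ∑ k ∈ Finset.Icc (1 : ℤ) (-⌊⟪ν, coroot a.1⟫⌋),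
        f (x - ν - k • a.1)) := by
  set F : ℤ → ℂ := fun k => f (x - ν + k • a.1) with hF
  obtain ⟨Φ, hΦ⟩ := exists_antidiff F
  have hG : (if 0 < ⌊⟪ν, coroot a.1⟫⌋ then
    ∑ k ∈ Finset.Ico (0 : ℤ) ⌊⟪ν, coroot a.1⟫⌋, f (x - ν + k • a.1)
  else if ⌊⟪ν, coroot a.1⟫⌋ = 0 then 0
  else - ∑ k ∈ Finset.Icc (1 : ℤ) (-⌊⟪ν, coroot a.1⟫⌋),
        f (x - ν - k • a.1)) = Φ n - Φ 0 := by
    rw [hn, Int.floor_intCast]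
    split_ifs with h1 h2
    · obtain ⟨m, rfl⟩ := Int.eq_ofNat_of_zero_le h1.le
      exact sum_Ico_antidiff F Φ hΦ m
    · subst h2; simp
    · obtain ⟨m, hm⟩ := Int.eq_ofNat_of_zero_le (show 0 ≤ -n by omega)
      have := sum_Icc_antidiff F Φ hΦ m
      simp only [hF, neg_smul, ← sub_eq_add_neg] at this
      rw [hm, this, ← hm]; simp
  rw [hG]
  have hy : x - (ν - ⟪ν, coroot a.1⟫ • a.1) = x - ν + n • a.1 := by
    rw [hn, Int.cast_smul_eq_zsmul]; abel
  have hyv : aval c a (x - ν + n • a.1) = ((p + n : ℤ) : ℝ) := by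
    rw [← Int.cast_smul_eq_zsmul ℝ, aval_add_smul, inner_coroot_self _ ha]
    have : x - ν = x + (-1:ℝ) • ν := by simp [sub_eq_add_neg]
    rw [this, aval_add_smul, hp, hn]
    push_cast; ring
  rw [hy, Iop, Iop, Jop_eq c a _ x p hp Φ, Jop_eq c a f _ _ hyv (fun k => Φ (n + k))]
  · have e1 : sAff c a x - ν = sAff c a (x - ν + n • a.1) := by
      rw [sAff, sAff, hyv, hp, Int.cast_smul_eq_zsmul, Int.cast_smul_eq_zsmul, add_smul]; abel
    have e2 : n + -(p+n) = -p := by ring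
    simp only [e1, e2, add_zero]
    ring
  · intro k
    rw [← add_assoc, hΦ, hF]
    simp only [add_smul, add_assoc]
  · intro k
    rw [hΦ, hF]
    simp only
    congr 1; abel

end AntiDiff
section GroupAlg
variable {V : Type*} [NormedAddCommGroup V] [InnerProductSpace ℝ V]

/-- the group algebra of `V` is a domain -/
instance gaDomain : IsDomain (AddMonoidAlgebra ℂ V) := by
  letI : Module ℚ V := Module.compHom V (algebraMap ℚ ℝ)
  infer_instance

variable (V) in
/-- field of fractions of the group algebra -/
abbrev KK := FractionRing (AddMonoidAlgebra ℂ V)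

/-- the formal exponential -/
def EE (x : V) : KK V := algebraMap (AddMonoidAlgebra ℂ V) (KK V) (AddMonoidAlgebra.single x 1)

theorem EE_add (x y : V) : EE (x + y) = EE x * EE y := by
  unfold EE
  rw [← map_mul, AddMonoidAlgebra.single_mul_single, one_mul]

theorem EE_zero : EE (0 : V) = 1 := by
  unfold EE
  rw [← AddMonoidAlgebra.one_def, map_one]

theorem EE_inj {x y : V} (h : EE x = EE y) : x = y :=
  AddMonoidAlgebra.single_left_injective one_ne_zero
    (IsFractionRing.injective (AddMonoidAlgebra ℂ V) (KK V) h)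

theorem EE_ne_zero (x : V) : EE x ≠ 0 := by
  intro h
  have := EE_add x (-x)
  rw [add_neg_cancel, EE_zero, h, zero_mul] at this
  exact one_ne_zero this

theorem EE_neg (x : V) : EE (-x) = (EE x)⁻¹ := by
  have := EE_add x (-x)
  rw [add_neg_cancel, EE_zero] at this
  exact (inv_eq_of_mul_eq_one_right this.symm).symm

theorem EE_nsmul (n : ℕ) (x : V) : EE (n • x) = EE x ^ n := by
  induction n with
  | zero => simp [EE_zero]
  | succ n ih => rw [succ_nsmul, EE_add, ih, pow_succ]

theorem one_sub_EE {x : V} (h : x ≠ 0) : 1 - EE x ≠ 0 := by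
  intro h1
  rw [← EE_zero, sub_eq_zero] at h1
  exact h (EE_inj h1).symm

/-- constants -/
def CC (z : ℂ) : KK V := algebraMap ℂ (KK V) z

theorem CC_eq (z : ℂ) : (CC z : KK V)
    = algebraMap (AddMonoidAlgebra ℂ V) (KK V) (AddMonoidAlgebra.single 0 z) := by
  unfold CC
  rw [IsScalarTower.algebraMap_apply ℂ (AddMonoidAlgebra ℂ V) (KK V)]
  rfl

theorem CC_mul_smul (z : ℂ) (g : KK V) : CC z * g = z • g := by
  unfold CC; rw [Algebra.smul_def]

theorem KK_hom_ext (f g : KK V →+* KK V) (hE : ∀ x : V, f (EE x) = g (EE x))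
    (hC : ∀ z : ℂ, f (CC z) = g (CC z)) : f = g := by
  apply IsLocalization.ringHom_ext (nonZeroDivisors (AddMonoidAlgebra ℂ V))
  apply AddMonoidAlgebra.ringHom_ext
  · intro r
    have := hC r
    rw [CC_eq] at this
    exact this
  · intro m
    exact hE m

/-- ring automorphism induced by an additive automorphism -/
def sg (e : V ≃+ V) : KK V →+* KK V :=
  (IsFractionRing.ringEquivOfRingEquiv (K := KK V) (L := KK V)
    (AddMonoidAlgebra.domCongr ℂ ℂ e).toRingEquiv).toRingHom

theorem sg_EE (e : V ≃+ V) (x : V) : sg e (EE x) = EE (e x) := by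
  unfold sg EE
  simp

theorem sg_CC (e : V ≃+ V) (z : ℂ) : sg e (CC z : KK V) = CC z := by
  rw [CC_eq]
  unfold sg
  simp

/-- the linear reflection -/
def lr (α : V) (x : V) : V := x - ⟪x, coroot α⟫ • α

theorem lr_add (α x y : V) : lr α (x + y) = lr α x + lr α y := by
  unfold lr; rw [inner_add_left, add_smul]; abel

theorem lr_smul (α x : V) (k : ℝ) : lr α (k • x) = k • lr α x := by
  unfold lr; rw [real_inner_smul_left, smul_sub, smul_smul]

theorem lr_lr (α x : V) : lr α (lr α x) = x := by
  by_cases h : α = 0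
  · subst h; simp [lr]
  · unfold lr
    rw [inner_sub_left, real_inner_smul_left, inner_coroot_self α h, ← sub_eq_zero]
    module

/-- the reflection as an additive equivalence -/
def lre (α : V) : V ≃+ V where
  toFun := lr α
  invFun := lr α
  left_inv := lr_lr α
  right_inv := lr_lr α
  map_add' := lr_add α

/-- the reflection on the field -/
def sl (α : V) : KK V →+* KK V := sg (lre α)

theorem sl_EE (α x : V) : sl α (EE x) = EE (lr α x) := sg_EE _ _
theorem sl_CC (α : V) (z : ℂ) : sl α (CC z) = CC z := sg_CC _ _

theorem sl_sl (α : V) (g : KK V) : sl α (sl α g) = g := by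
  have : (sl α).comp (sl α) = RingHom.id (KK V) := by
    apply KK_hom_ext
    · intro x; simp [sl_EE, lr_lr]
    · intro x; simp [sl_CC]
  exact DFunLike.congr_fun this g

/-- The Demazure-Lusztig operator as a linear map -/
def TL (t : ℂ) (α : V) : KK V →ₗ[ℂ] KK V where
  toFun := TT (sl α) (CC t) (EE α)
  map_add' x y := by
    unfold TT; rw [map_add]; ring
  map_smul' z x := by
    simp only [← CC_mul_smul, RingHom.id_apply]
    unfold TT; rw [map_mul, sl_CC]; ring

theorem TL_apply (t : ℂ) (α : V) (g : KK V) : TL t α g = TT (sl α) (CC t) (EE α) g := rfl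

theorem CC_ne_zero {t : ℂ} (h : t ≠ 0) : (CC t : KK V) ≠ 0 := by
  unfold CC; simpa using h

theorem CC_inv (t : ℂ) : (CC t⁻¹ : KK V) = (CC t)⁻¹ := by
  unfold CC; simp

theorem CC_sub (t s : ℂ) : (CC (t - s) : KK V) = CC t - CC s := by
  unfold CC; simp

theorem exists_ext (f : V → ℂ) : ∃ S : KK V →ₗ[ℂ] ℂ, ∀ x, S (EE x) = f x := by
  let ι : AddMonoidAlgebra ℂ V →ₗ[ℂ] KK V :=
    (Algebra.linearMap (AddMonoidAlgebra ℂ V) (KK V)).restrictScalars ℂ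
  have hι : LinearMap.ker ι = ⊥ := by
    rw [LinearMap.ker_eq_bot]
    exact IsFractionRing.injective (AddMonoidAlgebra ℂ V) (KK V)
  obtain ⟨g, hg⟩ := ι.exists_leftInverse_of_injective hι
  let F : AddMonoidAlgebra ℂ V →ₗ[ℂ] ℂ :=
    { toFun := fun a => Finsupp.linearCombination ℂ f a.coeff
      map_add' := by intro x y; simp
      map_smul' := by intro x y; simp }
  refine ⟨F.comp g, fun x => ?_⟩
  have : g (EE x) = AddMonoidAlgebra.single x 1 := DFunLike.congr_fun hg _
  simp only [LinearMap.comp_apply, this]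
  simp [F]

/-- `f` is represented by the functional `S` on the admissible points -/
def ReprBy (c : ℝ) (a b : V × ℤ) (x0 : V) (f : V → ℂ) (S : KK V →ₗ[ℂ] ℂ) : Prop :=
  ∀ x, (∃ p : ℤ, aval c a x = p) → (∃ q : ℤ, aval c b x = q) → f x = S (EE (x - x0))

theorem ReprBy.swap {c : ℝ} {a b : V × ℤ} {x0 : V} {f : V → ℂ} {S : KK V →ₗ[ℂ] ℂ}
    (h : ReprBy c a b x0 f S) : ReprBy c b a x0 f S := fun x h1 h2 => h x h2 h1

theorem ReprBy.step {c : ℝ} {a b : V × ℤ} {x0 : V} {f : V → ℂ} {S : KK V →ₗ[ℂ] ℂ}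
    (h : ReprBy c a b x0 f S) (τ : V × ℤ → ℂ) (ha : a.1 ≠ 0) (h0 : aval c a x0 = 0)
    (hA : ∃ A : ℤ, ⟪a.1, coroot b.1⟫ = A) :
    ReprBy c a b x0 (Iop c τ a f) (S ∘ₗ TL (τ a) a.1) := by
  rintro x ⟨p, hp⟩ ⟨q, hq⟩
  obtain ⟨A, hA⟩ := hA
  have hf : ∀ k : ℤ, f (x + k • a.1) = S (EE (x + k • a.1 - x0)) := by
    intro k
    apply h
    · refine ⟨p + 2 * k, ?_⟩
      rw [← Int.cast_smul_eq_zsmul ℝ, aval_add_smul, inner_coroot_self _ ha, hp]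
      push_cast; ring
    · refine ⟨q + k * A, ?_⟩
      rw [← Int.cast_smul_eq_zsmul ℝ, aval_add_smul, hA, hq]
      push_cast; ring
  have hs : sAff c a x = x + (-p) • a.1 := by
    rw [sAff, hp, Int.cast_smul_eq_zsmul, neg_smul, sub_eq_add_neg]
  have hX : EE a.1 - 1 ≠ 0 := by
    have := one_sub_EE ha
    intro h1; apply this; linear_combination -h1
  have hlr : EE (x + (-p) • a.1 - x0) = sl a.1 (EE (x - x0)) := by
    rw [sl_EE]
    congr 1
    have : ⟪x - x0, coroot a.1⟫ = p := by
      rw [← hp, inner_sub_left]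
      unfold aval at h0 ⊢
      linarith
    rw [lr, this, Int.cast_smul_eq_zsmul, neg_smul]; abel
  rw [Iop, Jop_eq c a f x p hp (fun k => S (EE (x + k • a.1 - x0) / (EE a.1 - 1))), hs, hf,
    LinearMap.comp_apply, TL_apply]
  · unfold TT
    rw [← CC_inv, ← CC_sub, map_add, CC_mul_smul, CC_mul_smul, map_smul, map_smul, smul_eq_mul,
      smul_eq_mul, ← map_sub, hlr]
    simp only [zero_smul, add_zero]
    congr 3
    have := one_sub_EE ha
    field_simp
    ring
  · intro k
    rw [hf, ← map_sub]
    congr 1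
    have : x + (k + 1) • a.1 - x0 = (x + k • a.1 - x0) + a.1 := by
      rw [add_smul, one_smul]; abel
    rw [this, EE_add]
    field_simp

theorem ReprBy.start (c : ℝ) (a b : V × ℤ) (x0 : V) (f : V → ℂ) : ∃ S, ReprBy c a b x0 f S := by
  obtain ⟨S, hS⟩ := exists_ext (fun y => f (y + x0))
  refine ⟨S, fun x _ _ => ?_⟩
  rw [hS]; simp

end GroupAlg
section RankTwoGeom
variable {V : Type*} [NormedAddCommGroup V] [InnerProductSpace ℝ V]

theorem lr_comb1 (α β x : V) (hα : α ≠ 0) (B : ℝ) (hB : ⟪β, coroot α⟫ = B) (i j : ℝ) :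
    lr α (x + i • α + j • β) = x + (-⟪x, coroot α⟫ - i - j * B) • α + j • β := by
  unfold lr
  rw [inner_add_left, inner_add_left, real_inner_smul_left, real_inner_smul_left, hB,
    inner_coroot_self α hα]
  module

theorem lr_comb2 (α β x : V) (hβ : β ≠ 0) (A : ℝ) (hA : ⟪α, coroot β⟫ = A) (i j : ℝ) :
    lr β (x + i • α + j • β) = x + i • α + (-⟪x, coroot β⟫ - j - i * A) • β := by
  unfold lr
  rw [inner_add_left, inner_add_left, real_inner_smul_left, real_inner_smul_left, hA,
    inner_coroot_self β hβ]
  module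

theorem sAff_comb1 (c : ℝ) (a : V × ℤ) (β x : V) (hα : a.1 ≠ 0) (B : ℝ)
    (hB : ⟪β, coroot a.1⟫ = B) (i j : ℝ) :
    sAff c a (x + i • a.1 + j • β) = x + (-aval c a x - i - j * B) • a.1 + j • β := by
  unfold sAff
  rw [aval_add_smul, aval_add_smul, hB, inner_coroot_self _ hα]
  module

theorem sAff_comb2 (c : ℝ) (b : V × ℤ) (α x : V) (hβ : b.1 ≠ 0) (A : ℝ)
    (hA : ⟪α, coroot b.1⟫ = A) (i j : ℝ) :
    sAff c b (x + i • α + j • b.1) = x + i • α + (-aval c b x - j - i * A) • b.1 := by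
  unfold sAff
  rw [aval_add_smul, aval_add_smul, hA, inner_coroot_self _ hβ]
  module

/-- one step of the rotation in coordinates -/
def rstep (A B p q : ℝ) (z : ℝ × ℝ) : ℝ × ℝ :=
  (-p - z.1 - (-q - z.2 - z.1 * A) * B, -q - z.2 - z.1 * A)

theorem iter_comb (c : ℝ) (a b : V × ℤ) (ha : a.1 ≠ 0) (hb : b.1 ≠ 0) (A B : ℝ)
    (hA : ⟪a.1, coroot b.1⟫ = A) (hB : ⟪b.1, coroot a.1⟫ = B) (x : V) (k : ℕ) :
    (fun x => sAff c a (sAff c b x))^[k] x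
      = x + ((rstep A B (aval c a x) (aval c b x))^[k] (0, 0)).1 • a.1
        + ((rstep A B (aval c a x) (aval c b x))^[k] (0, 0)).2 • b.1 := by
  induction k with
  | zero => simp
  | succ k ih =>
    rw [Function.iterate_succ_apply', Function.iterate_succ_apply', ih]
    rw [sAff_comb2 c b a.1 x hb A hA, sAff_comb1 c a b.1 x ha B hB]
    rfl

theorem exists_vals (c : ℝ) (a b : V × ℤ) (ha : a.1 ≠ 0) (hb : b.1 ≠ 0) (A B : ℝ)
    (hA : ⟪a.1, coroot b.1⟫ = A) (hB : ⟪b.1, coroot a.1⟫ = B) (hd : 4 - A * B ≠ 0) (p q : ℝ) :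
    ∃ x, aval c a x = p ∧ aval c b x = q := by
  set p' := p - a.2 * c with hp'
  set q' := q - b.2 * c with hq'
  refine ⟨((2 * p' - B * q') / (4 - A * B)) • a.1 + ((2 * q' - A * p') / (4 - A * B)) • b.1, ?_, ?_⟩
  · unfold aval
    rw [inner_add_left, real_inner_smul_left, real_inner_smul_left, hB, inner_coroot_self _ ha,
      ← sub_eq_zero]
    have e : (4 - A * B)⁻¹ * (4 - A * B) = 1 := inv_mul_cancel₀ hd
    have h : p = p' + a.2 * c := by rw [hp']; ring
    rw [h, div_eq_mul_inv, div_eq_mul_inv]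
    linear_combination p' * e
  · unfold aval
    rw [inner_add_left, real_inner_smul_left, real_inner_smul_left, hA, inner_coroot_self _ hb,
      ← sub_eq_zero]
    have e : (4 - A * B)⁻¹ * (4 - A * B) = 1 := inv_mul_cancel₀ hd
    have h : q = q' + b.2 * c := by rw [hq']; ring
    rw [h, div_eq_mul_inv, div_eq_mul_inv]
    linear_combination q' * e

theorem order_eq (c : ℝ) (a b : V × ℤ) (ha : a.1 ≠ 0) (hb : b.1 ≠ 0) (A B : ℝ)
    (hA : ⟪a.1, coroot b.1⟫ = A) (hB : ⟪b.1, coroot a.1⟫ = B) (hd : 4 - A * B ≠ 0)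
    (hli : ∀ i j : ℝ, i • a.1 + j • b.1 = 0 → i = 0 ∧ j = 0)
    (N : ℕ) (hN : 0 < N) (h1 : ∀ p q, (rstep A B p q)^[N] (0,0) = (0,0))
    (h2 : ∀ k, 0 < k → k < N → (rstep A B 1 0)^[k] (0,0) ≠ (0,0))
    (m : ℕ) (hm : 0 < m) (hm1 : (fun x => sAff c a (sAff c b x))^[m] = id)
    (hm2 : ∀ m' : ℕ, 0 < m' → m' < m → (fun x => sAff c a (sAff c b x))^[m'] ≠ id) : m = N := by
  rcases lt_trichotomy m N with h | h | h
  · exfalso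
    obtain ⟨x, hx1, hx2⟩ := exists_vals c a b ha hb A B hA hB hd 1 0
    have h3 := congrFun hm1 x
    rw [iter_comb c a b ha hb A B hA hB, hx1, hx2, id, add_assoc] at h3
    have h4 := hli _ _ (add_eq_left.mp h3)
    exact h2 m hm h (Prod.ext h4.1 h4.2)
  · exact h
  · exfalso
    apply hm2 N hN h
    funext x
    rw [iter_comb c a b ha hb A B hA hB, h1]
    simp

theorem sl_comp_ext {l1 l2 : KK V →+* KK V} (h : ∀ x, l1 (EE x) = l2 (EE x))
    (hC : ∀ z, l1 (CC z) = l2 (CC z)) (g : KK V) : l1 g = l2 g := by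
  rw [KK_hom_ext l1 l2 h hC]

theorem one_sub_comb (a b : V × ℤ)
    (hli : ∀ i j : ℝ, i • a.1 + j • b.1 = 0 → i = 0 ∧ j = 0) (i j : ℕ) (hij : i ≠ 0 ∨ j ≠ 0) : 1 - EE a.1 ^ i * EE b.1 ^ j ≠ 0 := by
  rw [← EE_nsmul, ← EE_nsmul, ← EE_add]
  apply one_sub_EE
  intro h
  rw [← Nat.cast_smul_eq_nsmul ℝ, ← Nat.cast_smul_eq_nsmul ℝ] at h
  have := hli _ _ h
  simp at this
  omega

theorem sl_self (α : V) (h : α ≠ 0) : sl α (EE α) = (EE α)⁻¹ := by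
  rw [sl_EE, ← EE_neg, lr, inner_coroot_self _ h]
  congr 1
  module

theorem sl_other (α β : V) (k : ℕ) (h : ⟪β, coroot α⟫ = -(k:ℝ)) :
    sl α (EE β) = EE α ^ k * EE β := by
  rw [sl_EE, lr, h, ← EE_nsmul, ← EE_add, ← Nat.cast_smul_eq_nsmul ℝ]
  congr 1
  module

/-- common data of a pair of affine roots -/
structure PairData (c : ℝ) (τ : V × ℤ → ℂ) (a b : V × ℤ) (A B : ℕ) : Prop where
  ha : a.1 ≠ 0
  hb : b.1 ≠ 0
  hA : ⟪a.1, coroot b.1⟫ = -(A:ℝ)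
  hB : ⟪b.1, coroot a.1⟫ = -(B:ℝ)
  hli : ∀ i j : ℝ, i • a.1 + j • b.1 = 0 → i = 0 ∧ j = 0
  hd : (4:ℝ) - (-(A:ℝ)) * (-(B:ℝ)) ≠ 0
  hta : τ a ≠ 0
  htb : τ b ≠ 0

theorem PairData.reps {c : ℝ} {τ : V × ℤ → ℂ} {a b : V × ℤ} {A B : ℕ}
    (P : PairData c τ a b A B) (f : V → ℂ) : ∃ (x0 : V) (S : KK V →ₗ[ℂ] ℂ),
    ReprBy c a b x0 f S ∧ (∀ g S', ReprBy c a b x0 g S' →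
      ReprBy c a b x0 (Iop c τ a g) (S' ∘ₗ TL (τ a) a.1)) ∧
     (∀ g S', ReprBy c a b x0 g S' →
      ReprBy c a b x0 (Iop c τ b g) (S' ∘ₗ TL (τ b) b.1)) := by
  obtain ⟨x0, h1, h2⟩ := exists_vals c a b P.ha P.hb _ _ P.hA P.hB P.hd 0 0
  obtain ⟨S, hS⟩ := ReprBy.start c a b x0 f
  refine ⟨x0, S, hS, ?_, ?_⟩
  · intro g S' h
    exact h.step τ P.ha h1 ⟨-(A:ℤ), by rw [P.hA]; push_cast; rfl⟩
  · intro g S' h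
    exact (h.swap.step τ P.hb h2 ⟨-(B:ℤ), by rw [P.hB]; push_cast; rfl⟩).swap

end RankTwoGeom
section RankTwoBraid
variable {V : Type*} [NormedAddCommGroup V] [InnerProductSpace ℝ V]

theorem TLbraid2 {c : ℝ} {τ : V × ℤ → ℂ} {a b : V × ℤ} (P : PairData c τ a b 0 0) (x : V) :
    TL (τ a) a.1 (TL (τ b) b.1 (EE x)) = TL (τ b) b.1 (TL (τ a) a.1 (EE x)) := by
  have x1 : sl a.1 (EE b.1) = EE b.1 := by
    have := sl_other a.1 b.1 0 P.hB
    rwa [pow_zero, one_mul] at this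
  have y1 : sl b.1 (EE a.1) = EE a.1 := by
    have := sl_other b.1 a.1 0 P.hA
    rwa [pow_zero, one_mul] at this
  have hw : sl a.1 (sl b.1 (EE x)) = sl b.1 (sl a.1 (EE x)) := by
    simp only [sl_EE]
    have h1 := lr_comb1 a.1 b.1 x P.ha _ P.hB
    have h2 := lr_comb2 a.1 b.1 x P.hb _ P.hA
    have h0 : x = x + (0:ℝ) • a.1 + (0:ℝ) • b.1 := by simp
    rw [h0]
    simp only [h1, h2]
    congr 1
    push_cast
    module
  simp only [TL_apply]
  exact braidK2 (K := KK V) (sl a.1) (sl b.1) (CC (τ a)) (CC (τ b)) (EE a.1) (EE b.1)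
    (CC_ne_zero P.hta)
    (CC_ne_zero P.htb) (sl_CC _ _) (sl_CC _ _) (sl_CC _ _) (sl_CC _ _) x1 y1
     (one_sub_EE P.ha) (one_sub_EE P.hb) _ hw

theorem TLbraid3 {c : ℝ} {τ : V × ℤ → ℂ} {a b : V × ℤ} (P : PairData c τ a b 1 1)
    (hab : τ a = τ b) (x : V) :
    TL (τ a) a.1 (TL (τ b) b.1 (TL (τ a) a.1 (EE x)))
      = TL (τ b) b.1 (TL (τ a) a.1 (TL (τ b) b.1 (EE x))) := by
  have x1 : sl a.1 (EE b.1) = EE a.1 * EE b.1 := by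
    have := sl_other a.1 b.1 1 P.hB
    rwa [pow_one] at this
  have y1 : sl b.1 (EE a.1) = EE a.1 * EE b.1 := by
    have := sl_other b.1 a.1 1 P.hA
    rwa [pow_one, mul_comm] at this
  have hw : sl a.1 (sl b.1 (sl a.1 (EE x)))
      = sl b.1 (sl a.1 (sl b.1 (EE x))) := by
    simp only [sl_EE]
    have h1 := lr_comb1 a.1 b.1 x P.ha _ P.hB
    have h2 := lr_comb2 a.1 b.1 x P.hb _ P.hA
    have h0 : x = x + (0:ℝ) • a.1 + (0:ℝ) • b.1 := by simp
    rw [h0]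
    simp only [h1, h2]
    refine congrArg EE (congrArg₂ (· + ·) (congrArg₂ (· + ·) rfl (congrArg₂ (· • ·) ?_ rfl))
      (congrArg₂ (· • ·) ?_ rfl)) <;> (push_cast; ring)
  have nz := one_sub_comb a b P.hli
  have n11 : 1 - EE a.1 * EE b.1 ≠ 0 := by
    have := nz 1 1 (by simp)
    rwa [pow_one, pow_one] at this
  simp only [TL_apply]
  rw [← hab]
  exact braidK3 (K := KK V) (sl a.1) (sl b.1) (CC (τ a)) (EE a.1) (EE b.1)
    (CC_ne_zero P.hta) (EE_ne_zero _) (EE_ne_zero _) (sl_sl _) (sl_sl _)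
    (sl_CC _ _) (sl_CC _ _) (sl_self _ P.ha) x1 (sl_self _ P.hb) y1
    (one_sub_EE P.ha) n11 (one_sub_EE P.hb) _ hw

theorem TLbraid4 {c : ℝ} {τ : V × ℤ → ℂ} {a b : V × ℤ} (P : PairData c τ a b 1 2)
    (x : V) :
    TL (τ a) a.1 (TL (τ b) b.1 (TL (τ a) a.1 (TL (τ b) b.1 (EE x))))
      = TL (τ b) b.1 (TL (τ a) a.1 (TL (τ b) b.1 (TL (τ a) a.1 (EE x)))) := by
  have x1 : sl a.1 (EE b.1) = EE a.1 ^ 2 * EE b.1 := sl_other a.1 b.1 2 P.hB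
  have y1 : sl b.1 (EE a.1) = EE a.1 * EE b.1 := by
    have := sl_other b.1 a.1 1 P.hA
    rwa [pow_one, mul_comm] at this
  have hw : sl a.1 (sl b.1 (sl a.1 (sl b.1 (EE x))))
      = sl b.1 (sl a.1 (sl b.1 (sl a.1 (EE x)))) := by
    simp only [sl_EE]
    have h1 := lr_comb1 a.1 b.1 x P.ha _ P.hB
    have h2 := lr_comb2 a.1 b.1 x P.hb _ P.hA
    have h0 : x = x + (0:ℝ) • a.1 + (0:ℝ) • b.1 := by simp
    rw [h0]
    simp only [h1, h2]
    refine congrArg EE (congrArg₂ (· + ·) (congrArg₂ (· + ·) rfl (congrArg₂ (· • ·) ?_ rfl))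
      (congrArg₂ (· • ·) ?_ rfl)) <;> (push_cast; ring)
  have nz := one_sub_comb a b P.hli
  have n11 : 1 - EE a.1 * EE b.1 ≠ 0 := by
    have := nz 1 1 (by simp)
    rwa [pow_one, pow_one] at this
  have n21 : 1 - EE a.1 ^ 2 * EE b.1 ≠ 0 := by
    have := nz 2 1 (by simp)
    rwa [pow_one] at this
  simp only [TL_apply]
  exact braidK4 (K := KK V) (sl a.1) (sl b.1) (CC (τ a)) (CC (τ b)) (EE a.1) (EE b.1)
    (CC_ne_zero P.hta) (CC_ne_zero P.htb) (EE_ne_zero _) (EE_ne_zero _) (sl_sl _) (sl_sl _)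
    (sl_CC _ _) (sl_CC _ _) (sl_CC _ _) (sl_CC _ _) (sl_self _ P.ha) x1 (sl_self _ P.hb) y1
    (one_sub_EE P.ha) n11 (one_sub_EE P.hb) n21 _ hw

theorem TLbraid6 {c : ℝ} {τ : V × ℤ → ℂ} {a b : V × ℤ} (P : PairData c τ a b 1 3)
    (x : V) :
    TL (τ a) a.1 (TL (τ b) b.1 (TL (τ a) a.1 (TL (τ b) b.1 (TL (τ a) a.1 (TL (τ b) b.1 (EE x))))))
      = TL (τ b) b.1 (TL (τ a) a.1 (TL (τ b) b.1 (TL (τ a) a.1 (TL (τ b) b.1 (TL (τ a) a.1 (EE x)))))) := by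
  have x1 : sl a.1 (EE b.1) = EE a.1 ^ 3 * EE b.1 := sl_other a.1 b.1 3 P.hB
  have y1 : sl b.1 (EE a.1) = EE a.1 * EE b.1 := by
    have := sl_other b.1 a.1 1 P.hA
    rwa [pow_one, mul_comm] at this
  have hw : sl a.1 (sl b.1 (sl a.1 (sl b.1 (sl a.1 (sl b.1 (EE x))))))
      = sl b.1 (sl a.1 (sl b.1 (sl a.1 (sl b.1 (sl a.1 (EE x)))))) := by
    simp only [sl_EE]
    have h1 := lr_comb1 a.1 b.1 x P.ha _ P.hB
    have h2 := lr_comb2 a.1 b.1 x P.hb _ P.hA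
    have h0 : x = x + (0:ℝ) • a.1 + (0:ℝ) • b.1 := by simp
    rw [h0]
    simp only [h1, h2]
    refine congrArg EE (congrArg₂ (· + ·) (congrArg₂ (· + ·) rfl (congrArg₂ (· • ·) ?_ rfl))
      (congrArg₂ (· • ·) ?_ rfl)) <;> (push_cast; ring)
  have nz := one_sub_comb a b P.hli
  have n11 : 1 - EE a.1 * EE b.1 ≠ 0 := by
    have := nz 1 1 (by simp)
    rwa [pow_one, pow_one] at this
  have n21 : 1 - EE a.1 ^ 2 * EE b.1 ≠ 0 := by
    have := nz 2 1 (by simp)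
    rwa [pow_one] at this
  have n31 : 1 - EE a.1 ^ 3 * EE b.1 ≠ 0 := by
    have := nz 3 1 (by simp)
    rwa [pow_one] at this
  simp only [TL_apply]
  exact braidK6 (K := KK V) (sl a.1) (sl b.1) (CC (τ a)) (CC (τ b)) (EE a.1) (EE b.1)
    (CC_ne_zero P.hta) (CC_ne_zero P.htb) (EE_ne_zero _) (EE_ne_zero _) (sl_sl _) (sl_sl _)
    (sl_CC _ _) (sl_CC _ _) (sl_CC _ _) (sl_CC _ _) (sl_self _ P.ha) x1 (sl_self _ P.hb) y1
    (one_sub_EE P.ha) n11 n21 (one_sub_EE P.hb) n31 (nz 3 2 (by simp)) _ hw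

theorem braid2 {c : ℝ} {τ : V × ℤ → ℂ} {a b : V × ℤ} (P : PairData c τ a b 0 0)
    (f : V → ℂ)
    (x : V) (hx1 : ∃ p : ℤ, aval c a x = p) (hx2 : ∃ p : ℤ, aval c b x = p) :
    altComp (Iop c τ a) (Iop c τ b) 2 f x = altComp (Iop c τ b) (Iop c τ a) 2 f x := by
  obtain ⟨x0, S, hS, ra, rb⟩ := P.reps f
  have e1 := ra _ _ (rb _ _ hS) x hx1 hx2
  have e2 := rb _ _ (ra _ _ hS) x hx1 hx2
  simp only [altComp, Function.comp_apply, id]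
  refine e1.trans (Eq.trans ?_ e2.symm)
  simp only [LinearMap.comp_apply]
  exact congrArg S (TLbraid2 P (x - x0)).symm

theorem braid3 {c : ℝ} {τ : V × ℤ → ℂ} {a b : V × ℤ} (P : PairData c τ a b 1 1)
    (hab : τ a = τ b) (f : V → ℂ)
    (x : V) (hx1 : ∃ p : ℤ, aval c a x = p) (hx2 : ∃ p : ℤ, aval c b x = p) :
    altComp (Iop c τ a) (Iop c τ b) 3 f x = altComp (Iop c τ b) (Iop c τ a) 3 f x := by
  obtain ⟨x0, S, hS, ra, rb⟩ := P.reps f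
  have e1 := ra _ _ (rb _ _ (ra _ _ hS)) x hx1 hx2
  have e2 := rb _ _ (ra _ _ (rb _ _ hS)) x hx1 hx2
  simp only [altComp, Function.comp_apply, id]
  refine e1.trans (Eq.trans ?_ e2.symm)
  simp only [LinearMap.comp_apply]
  exact congrArg S (TLbraid3 P hab (x - x0))

theorem braid4 {c : ℝ} {τ : V × ℤ → ℂ} {a b : V × ℤ} (P : PairData c τ a b 1 2)
    (f : V → ℂ)
    (x : V) (hx1 : ∃ p : ℤ, aval c a x = p) (hx2 : ∃ p : ℤ, aval c b x = p) :
    altComp (Iop c τ a) (Iop c τ b) 4 f x = altComp (Iop c τ b) (Iop c τ a) 4 f x := by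
  obtain ⟨x0, S, hS, ra, rb⟩ := P.reps f
  have e1 := ra _ _ (rb _ _ (ra _ _ (rb _ _ hS))) x hx1 hx2
  have e2 := rb _ _ (ra _ _ (rb _ _ (ra _ _ hS))) x hx1 hx2
  simp only [altComp, Function.comp_apply, id]
  refine e1.trans (Eq.trans ?_ e2.symm)
  simp only [LinearMap.comp_apply]
  exact congrArg S (TLbraid4 P (x - x0)).symm

theorem braid6 {c : ℝ} {τ : V × ℤ → ℂ} {a b : V × ℤ} (P : PairData c τ a b 1 3)
    (f : V → ℂ)
    (x : V) (hx1 : ∃ p : ℤ, aval c a x = p) (hx2 : ∃ p : ℤ, aval c b x = p) :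
    altComp (Iop c τ a) (Iop c τ b) 6 f x = altComp (Iop c τ b) (Iop c τ a) 6 f x := by
  obtain ⟨x0, S, hS, ra, rb⟩ := P.reps f
  have e1 := ra _ _ (rb _ _ (ra _ _ (rb _ _ (ra _ _ (rb _ _ hS))))) x hx1 hx2
  have e2 := rb _ _ (ra _ _ (rb _ _ (ra _ _ (rb _ _ (ra _ _ hS))))) x hx1 hx2
  simp only [altComp, Function.comp_apply, id]
  refine e1.trans (Eq.trans ?_ e2.symm)
  simp only [LinearMap.comp_apply]
  exact congrArg S (TLbraid6 P (x - x0)).symm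

end RankTwoBraid
section RankTwoMain
variable {V : Type*} [NormedAddCommGroup V] [InnerProductSpace ℝ V]

theorem PairData.symm {c : ℝ} {τ : V × ℤ → ℂ} {a b : V × ℤ} {A B : ℕ}
    (P : PairData c τ a b A B) : PairData c τ b a B A where
  ha := P.hb
  hb := P.ha
  hA := P.hB
  hB := P.hA
  hli := fun i j h => (P.hli j i (by rw [add_comm]; exact h)).symm
  hd := by rw [mul_comm]; exact P.hd
  hta := P.htb
  htb := P.hta

theorem rstep00 (p q : ℝ) : (rstep (-(0:ℕ)) (-(0:ℕ)) p q)^[2] (0,0) = (0,0) := by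
  simp [rstep]
theorem rstep11 (p q : ℝ) : (rstep (-(1:ℕ)) (-(1:ℕ)) p q)^[3] (0,0) = (0,0) := by
  simp [rstep]
theorem rstep12 (p q : ℝ) : (rstep (-(1:ℕ)) (-(2:ℕ)) p q)^[4] (0,0) = (0,0) := by
  simp [rstep]; constructor <;> ring
theorem rstep21 (p q : ℝ) : (rstep (-(2:ℕ)) (-(1:ℕ)) p q)^[4] (0,0) = (0,0) := by
  simp [rstep]; constructor <;> ring
theorem rstep13 (p q : ℝ) : (rstep (-(1:ℕ)) (-(3:ℕ)) p q)^[6] (0,0) = (0,0) := by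
  simp [rstep]; constructor <;> ring
theorem rstep31 (p q : ℝ) : (rstep (-(3:ℕ)) (-(1:ℕ)) p q)^[6] (0,0) = (0,0) := by
  simp [rstep]; constructor <;> ring

theorem braid_pair {c : ℝ} {τ : V × ℤ → ℂ} {a b : V × ℤ} {A B : ℕ}
    (P : PairData c τ a b A B) (hAB : A * B < 4) (h0 : A = 0 ↔ B = 0)
    (hab : A = 1 → B = 1 → τ a = τ b)
    (m : ℕ) (hm : 0 < m) (hm1 : (fun x => sAff c a (sAff c b x))^[m] = id)
    (hm2 : ∀ m' : ℕ, 0 < m' → m' < m → (fun x => sAff c a (sAff c b x))^[m'] ≠ id) (f : V → ℂ)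
    (x : V) (hx1 : ∃ p : ℤ, aval c a x = p) (hx2 : ∃ p : ℤ, aval c b x = p) :
    altComp (Iop c τ a) (Iop c τ b) m f x = altComp (Iop c τ b) (Iop c τ a) m f x := by
  have key := fun N hN h1 h2 => order_eq c a b P.ha P.hb _ _ P.hA P.hB P.hd P.hli N hN h1 h2
    m hm hm1 hm2
  have hcases : (A = 0 ∧ B = 0) ∨ (A = 1 ∧ B = 1) ∨ (A = 1 ∧ B = 2) ∨ (A = 2 ∧ B = 1) ∨
      (A = 1 ∧ B = 3) ∨ (A = 3 ∧ B = 1) := by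
    rcases Nat.eq_zero_or_pos A with hA | hA
    · exact Or.inl ⟨hA, h0.mp hA⟩
    · have hB : 0 < B := by
        rcases Nat.eq_zero_or_pos B with h | h
        · exact absurd (h0.mpr h) hA.ne'
        · exact h
      have : A ≤ 3 := by nlinarith
      have : B ≤ 3 := by nlinarith
      interval_cases A <;> interval_cases B <;> simp_all
  rcases hcases with ⟨rfl, rfl⟩ | ⟨rfl, rfl⟩ | ⟨rfl, rfl⟩ | ⟨rfl, rfl⟩ | ⟨rfl, rfl⟩ | ⟨rfl, rfl⟩
  · rw [key 2 (by norm_num) rstep00 (by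
      intro k h1 h2; interval_cases k <;> norm_num [rstep])]
    exact braid2 P f x hx1 hx2
  · rw [key 3 (by norm_num) rstep11 (by
      intro k h1 h2; interval_cases k <;> norm_num [rstep])]
    exact braid3 P (hab rfl rfl) f x hx1 hx2
  · rw [key 4 (by norm_num) rstep12 (by
      intro k h1 h2; interval_cases k <;> norm_num [rstep])]
    exact braid4 P f x hx1 hx2
  · rw [key 4 (by norm_num) rstep21 (by
      intro k h1 h2; interval_cases k <;> norm_num [rstep])]
    exact (braid4 P.symm f x hx2 hx1).symm
  · rw [key 6 (by norm_num) rstep13 (by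
      intro k h1 h2; interval_cases k <;> norm_num [rstep])]
    exact braid6 P f x hx1 hx2
  · rw [key 6 (by norm_num) rstep31 (by
      intro k h1 h2; interval_cases k <;> norm_num [rstep])]
    exact (braid6 P.symm f x hx2 hx1).symm

end RankTwoMain
section RootFacts
variable {V : Type*} [NormedAddCommGroup V] [InnerProductSpace ℝ V]

theorem root_neg (D : RootSystemData V) (α : V) (h : α ∈ D.R0) : -α ∈ D.R0 := by
  have h1 := D.reflect_mem α h α h
  rw [inner_coroot_self α (D.ne_zero α h)] at h1
  have : α - (2:ℝ) • α = -α := by module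
  rwa [this] at h1

theorem aSimple_zero (D : RootSystemData V) : D.aSimple 0 = (-D.hshort, 1) := rfl
theorem aSimple_succ (D : RootSystemData V) (i : Fin D.n) :
    D.aSimple i.succ = (D.simpleRoot i, 0) := rfl

theorem aSimple_mem (D : RootSystemData V) (j : Fin (D.n + 1)) : (D.aSimple j).1 ∈ D.R0 := by
  refine Fin.cases ?_ (fun i => ?_) j
  · exact root_neg D _ (D.pos_subset D.hshort_mem)
  · exact D.pos_subset (D.simpleRoot_mem i)

theorem aSimple_ne (D : RootSystemData V) (j : Fin (D.n + 1)) : (D.aSimple j).1 ≠ 0 :=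
  D.ne_zero _ (aSimple_mem D j)

theorem aval_int (D : RootSystemData V) (cz : ℤ) (a : V × ℤ) (ha : a.1 ∈ D.R0) (x : V)
    (hx : x ∈ D.weightLattice) : ∃ p : ℤ, aval (cz : ℝ) a x = p := by
  obtain ⟨k, hk⟩ := hx a.1 ha
  exact ⟨k + a.2 * cz, by unfold aval; rw [hk]; push_cast; ring⟩

theorem simple_li (D : RootSystemData V) : LinearIndependent ℝ D.simpleRoot := by
  have : FiniteDimensional ℝ V := by
    apply Module.finite_of_finrank_pos
    rw [D.rank_eq]; exact D.n_pos
  apply linearIndependent_of_top_le_span_of_card_eq_finrank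
  · rw [← D.span_top, Submodule.span_le]
    have hp : ∀ α ∈ D.pos, α ∈ Submodule.span ℝ (Set.range D.simpleRoot) := by
      intro α hα
      obtain ⟨k, hk⟩ := D.pos_natCombo α hα
      rw [hk]
      exact Submodule.sum_mem _ fun j _ => Submodule.smul_mem _ _ (Submodule.subset_span ⟨j, rfl⟩)
    intro α hα
    rcases D.pos_or_neg α hα with h | h
    · exact hp α h
    · have := Submodule.neg_mem _ (hp _ h)
      rwa [neg_neg] at this
  · rw [D.rank_eq, Fintype.card_fin]

/-- coordinates in simple roots are unique -/
theorem coord_eq (D : RootSystemData V) (f g : Fin D.n → ℝ)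
    (h : ∑ j, f j • D.simpleRoot j = ∑ j, g j • D.simpleRoot j) (i : Fin D.n) : f i = g i := by
  have := Fintype.linearIndependent_iff.mp (simple_li D) (fun j => f j - g j) (by
    simp only [sub_smul, Finset.sum_sub_distrib, h, sub_self]) i
  linarith

theorem single_combo (D : RootSystemData V) (i k : Fin D.n) (s t : ℝ) :
    s • D.simpleRoot i + t • D.simpleRoot k
      = ∑ j, ((if j = i then s else 0) + (if j = k then t else 0)) • D.simpleRoot j := by
  simp [add_smul, Finset.sum_add_distrib, ite_smul]

theorem inner_coroot_eq (α β : V) : ⟪α, coroot β⟫ = 2 / ⟪β, β⟫ * ⟪α, β⟫ := by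
  unfold coroot; rw [real_inner_smul_right]

theorem inner_self_pos' (β : V) (h : β ≠ 0) : 0 < ⟪β, β⟫ := real_inner_self_pos.mpr h

theorem obtuse_simple (D : RootSystemData V) (i k : Fin D.n) (hik : i ≠ k) :
    ⟪D.simpleRoot i, D.simpleRoot k⟫ ≤ 0 := by
  by_contra hcon
  push Not at hcon
  have hi := D.pos_subset (D.simpleRoot_mem i)
  have hk := D.pos_subset (D.simpleRoot_mem k)
  set p := ⟪D.simpleRoot i, coroot (D.simpleRoot k)⟫ with hp
  have hp0 : 0 < p := by
    rw [hp, inner_coroot_eq]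
    have := inner_self_pos' _ (D.ne_zero _ hk)
    positivity
  have hr := D.reflect_mem _ hk _ hi
  rw [← hp] at hr
  rcases D.pos_or_neg _ hr with h | h
  · obtain ⟨n, hn⟩ := D.pos_natCombo _ h
    have e : D.simpleRoot i - p • D.simpleRoot k
      = (1:ℝ) • D.simpleRoot i + (-p) • D.simpleRoot k := by module
    rw [e, single_combo] at hn
    have := coord_eq D _ _ hn k
    simp [hik.symm] at this
    have h2 : (0:ℝ) ≤ n k := Nat.cast_nonneg _
    linarith
  · obtain ⟨n, hn⟩ := D.pos_natCombo _ h
    have e : -(D.simpleRoot i - p • D.simpleRoot k)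
      = (-1:ℝ) • D.simpleRoot i + p • D.simpleRoot k := by module
    rw [e, single_combo] at hn
    have := coord_eq D _ _ hn i
    simp [hik] at this
    have h2 : (0:ℝ) ≤ n i := Nat.cast_nonneg _
    linarith

theorem lr_norm (α x : V) : ‖lr α x‖ = ‖x‖ := by
  by_cases h : α = 0
  · subst h; simp [lr]
  have h0 := (inner_self_pos' α h).ne'
  have : ⟪lr α x, lr α x⟫ = ⟪x, x⟫ := by
    unfold lr
    rw [inner_coroot_eq, inner_sub_left, inner_sub_right, inner_sub_right, real_inner_smul_left,
      real_inner_smul_left, real_inner_smul_right, real_inner_smul_right, real_inner_comm x α]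
    field_simp
    ring
  rw [real_inner_self_eq_norm_sq, real_inner_self_eq_norm_sq] at this
  exact (sq_eq_sq₀ (norm_nonneg _) (norm_nonneg _)).mp this

theorem obtuse_short (D : RootSystemData V) (k : Fin D.n) :
    0 ≤ ⟪D.hshort, D.simpleRoot k⟫ := by
  by_contra hcon
  push Not at hcon
  have hi := D.pos_subset D.hshort_mem
  have hk := D.pos_subset (D.simpleRoot_mem k)
  set p := ⟪D.hshort, coroot (D.simpleRoot k)⟫ with hp
  have hp0 : p < 0 := by
    rw [hp, inner_coroot_eq]
    have := inner_self_pos' _ (D.ne_zero _ hk)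
    exact mul_neg_of_pos_of_neg (by positivity) hcon
  have hr := D.reflect_mem _ hk _ hi
  obtain ⟨n, hn⟩ := D.hshort_highest _ hr (lr_norm _ _)
  rw [← hp] at hn
  have e : D.hshort - (D.hshort - p • D.simpleRoot k)
      = (0:ℝ) • D.simpleRoot k + p • D.simpleRoot k := by module
  rw [e, single_combo] at hn
  have := coord_eq D _ _ hn k
  simp at this
  have h2 : (0:ℝ) ≤ n k := Nat.cast_nonneg _
  linarith

theorem obtuse (D : RootSystemData V) (j k : Fin (D.n + 1)) (h : j ≠ k) :
    ⟪(D.aSimple j).1, (D.aSimple k).1⟫ ≤ 0 := by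
  rcases Fin.eq_zero_or_eq_succ j with rfl | ⟨i, rfl⟩ <;>
  rcases Fin.eq_zero_or_eq_succ k with rfl | ⟨l, rfl⟩
  · exact absurd rfl h
  · rw [aSimple_zero, aSimple_succ, inner_neg_left]
    linarith [obtuse_short D l]
  · rw [aSimple_zero, aSimple_succ, inner_neg_right, real_inner_comm]
    linarith [obtuse_short D i]
  · exact obtuse_simple D i l (fun h' => h (by rw [h']))

/-- affine reflection as a permutation -/
def sPerm (c : ℝ) (a : V × ℤ) (ha : a.1 ≠ 0) : Equiv.Perm V where
  toFun := sAff c a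
  invFun := sAff c a
  left_inv x := by
    have := sAff_comb1 c a 0 x ha 0 (by simp) 
    have h1 := this (-aval c a x) 0
    have h2 : sAff c a x = x + (-aval c a x) • a.1 + (0:ℝ) • (0:V) := by unfold sAff; module
    rw [h2, h1]; simp
  right_inv x := by
    have := sAff_comb1 c a 0 x ha 0 (by simp) 
    have h1 := this (-aval c a x) 0
    have h2 : sAff c a x = x + (-aval c a x) • a.1 + (0:ℝ) • (0:V) := by unfold sAff; module
    rw [h2, h1]; simp

theorem sPerm_mem (D : RootSystemData V) (c : ℝ) (a : V × ℤ) (ha : a.1 ∈ D.R0) :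
    sPerm c a (D.ne_zero _ ha) ∈ D.Wext c :=
  Subgroup.subset_closure (Or.inl ⟨a, ha, fun _ => rfl⟩)

theorem tau_eq (D : RootSystemData V) (c : ℝ) (τ : V × ℤ → ℂ) (hτ : D.IsMultiplicity c τ)
    (a b : V × ℤ) (ha : a.1 ∈ D.R0) (hb : b.1 ∈ D.R0)
    (hA : ⟪a.1, coroot b.1⟫ = -1) (hB : ⟪b.1, coroot a.1⟫ = -1) : τ a = τ b := by
  refine hτ.2 (sPerm c a (D.ne_zero _ ha) * sPerm c b (D.ne_zero _ hb))
    (Subgroup.mul_mem _ (sPerm_mem D c a ha) (sPerm_mem D c b hb)) a b ha hb ?_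
  intro x
  have e : (sPerm c a (D.ne_zero _ ha) * sPerm c b (D.ne_zero _ hb))⁻¹ x
      = sAff c b (sAff c a x) := by
    rw [mul_inv_rev]; rfl
  have h1 : ∀ y, aval c a (sAff c b y) = aval c a y + aval c b y := by
    intro y
    have : sAff c b y = y + (-aval c b y) • b.1 := by unfold sAff; module
    rw [this, aval_add_smul, hB]; ring
  have h2 : aval c b (sAff c a x) = aval c b x + aval c a x := by
    have : sAff c a x = x + (-aval c a x) • a.1 := by unfold sAff; module
    rw [this, aval_add_smul, hA]; ring
  have h3 : aval c a (sAff c a x) = - aval c a x := by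
    have : sAff c a x = x + (-aval c a x) • a.1 := by unfold sAff; module
    rw [this, aval_add_smul, inner_coroot_self _ (D.ne_zero _ ha)]; ring
  rw [e, h1, h2, h3]; ring

theorem root_dep (D : RootSystemData V) (α β : V) (ha : α ∈ D.R0) (hb : β ∈ D.R0)
    (i j : ℝ) (h : i • α + j • β = 0) : (i = 0 ∧ j = 0) ∨ α = β ∨ α = -β := by
  by_cases hi : i = 0
  · left
    subst hi
    refine ⟨rfl, ?_⟩
    simpa [D.ne_zero _ hb] using h
  · right
    have e : α = (-(i⁻¹ * j)) • β := by
      have h1 : i • α = -(j • β) := eq_neg_of_add_eq_zero_left h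
      have h2 : α = i⁻¹ • (i • α) := by rw [smul_smul, inv_mul_cancel₀ hi, one_smul]
      rw [h2, h1]; module
    rcases D.reduced β hb (-(i⁻¹ * j)) (e ▸ ha) with h1 | h1
    · left; rw [e, h1, one_smul]
    · right; rw [e, h1]; module

theorem trans_infinite (c : ℝ) (hc : c ≠ 0) (a b : V × ℤ) (h1 : a.1 = -b.1) (hb : b.1 ≠ 0)
    (h2 : a.2 + b.2 ≠ 0) (m : ℕ) (hm : 0 < m) :
    (fun x => sAff c a (sAff c b x))^[m] ≠ id := by
  have hav : ∀ y, aval c a y = - aval c b y + (a.2 + b.2) * c := by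
    intro y
    have : coroot a.1 = - coroot b.1 := by
      rw [h1]; unfold coroot; rw [inner_neg_neg, smul_neg]
    unfold aval
    rw [this, inner_neg_right]; ring
  have hs : ∀ x, sAff c a (sAff c b x) = x + (((a.2:ℝ) + b.2) * c) • b.1 := by
    intro x
    have h3 : aval c b (sAff c b x) = - aval c b x := by
      have : sAff c b x = x + (-aval c b x) • b.1 := by unfold sAff; module
      rw [this, aval_add_smul, inner_coroot_self _ hb]; ring
    rw [sAff, hav, h3, h1, sAff]; module
  have hit : ∀ n : ℕ, (fun x => sAff c a (sAff c b x))^[n] 0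
      = ((n:ℝ) * (((a.2:ℝ) + b.2) * c)) • b.1 := by
    intro n
    induction n with
    | zero => simp
    | succ n ih =>
      rw [Function.iterate_succ_apply', ih, hs]; push_cast; module
  intro h
  have := congrFun h 0
  rw [hit, id, smul_eq_zero] at this
  have h5 : ((a.2:ℝ) + b.2) ≠ 0 := by exact_mod_cast h2
  have h6 : (m:ℝ) ≠ 0 := by exact_mod_cast hm.ne'
  rcases this with h | h
  · simp [hc, h5, h6] at h
  · exact hb h

theorem simple_dep (D : RootSystemData V) (j k : Fin (D.n + 1)) (h : j ≠ k) :
    (∀ x y : ℝ, x • (D.aSimple j).1 + y • (D.aSimple k).1 = 0 → x = 0 ∧ y = 0) ∨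
    ((D.aSimple j).1 = -(D.aSimple k).1 ∧ (D.aSimple j).2 + (D.aSimple k).2 ≠ 0) := by
  by_cases hs : (D.aSimple j).1 = -(D.aSimple k).1 ∧ (D.aSimple j).2 + (D.aSimple k).2 ≠ 0
  · exact Or.inr hs
  left
  intro x y hxy
  rcases root_dep D _ _ (aSimple_mem D j) (aSimple_mem D k) x y hxy with h1 | h1 | h1
  · exact h1
  · exfalso
    have := obtuse D j k h
    rw [h1] at this
    linarith [inner_self_pos' _ (aSimple_ne D k)]
  · exfalso
    apply hs
    refine ⟨h1, ?_⟩
    rcases Fin.eq_zero_or_eq_succ j with rfl | ⟨i, rfl⟩ <;>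
    rcases Fin.eq_zero_or_eq_succ k with rfl | ⟨l, rfl⟩
    · exact absurd rfl h
    · simp [aSimple_zero, aSimple_succ]
    · simp [aSimple_zero, aSimple_succ]
    · exfalso
      rw [aSimple_succ, aSimple_succ] at h1
      have := D.pos_not_both _ (D.simpleRoot_mem l)
      rw [← h1] at this
      exact this (D.simpleRoot_mem i)

theorem cs_strict (α β : V) (ha : α ≠ 0) (hb : β ≠ 0)
    (hli : ∀ i j : ℝ, i • α + j • β = 0 → i = 0 ∧ j = 0) :
    ⟪α, coroot β⟫ * ⟪β, coroot α⟫ < 4 := by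
  have pa := inner_self_pos' α ha
  have pb := inner_self_pos' β hb
  have hv : ⟪β, β⟫ • α + (-⟪α, β⟫) • β ≠ 0 := fun h => pb.ne' (hli _ _ h).1
  have h1 := inner_self_pos' _ hv
  have h2 : ⟪⟪β, β⟫ • α + (-⟪α, β⟫) • β, ⟪β, β⟫ • α + (-⟪α, β⟫) • β⟫
      = ⟪β, β⟫ * (⟪α, α⟫ * ⟪β, β⟫ - ⟪α, β⟫ ^ 2) := by
    simp only [inner_add_left, inner_add_right, real_inner_smul_left, real_inner_smul_right,
      real_inner_comm α β]
    ring
  rw [h2] at h1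
  have h3 := pos_of_mul_pos_right h1 pb.le
  rw [inner_coroot_eq, inner_coroot_eq, real_inner_comm α β]
  have e : 2 / ⟪β, β⟫ * ⟪α, β⟫ * (2 / ⟪α, α⟫ * ⟪α, β⟫)
    = 4 * ⟪α, β⟫ ^ 2 / (⟪α, α⟫ * ⟪β, β⟫) := by field_simp; ring
  rw [e, div_lt_iff₀ (by positivity)]
  linarith

theorem braid_final (D : RootSystemData V) (cz : ℤ) (hc : 1 < cz)
    (τ : V × ℤ → ℂ) (hτ : D.IsMultiplicity (cz : ℝ) τ) (j k : Fin (D.n + 1)) (hjk : j ≠ k)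
    (m : ℕ) (hm : 0 < m)
    (hm1 : (fun x => sAff (cz : ℝ) (D.aSimple j) (sAff (cz : ℝ) (D.aSimple k) x))^[m] = id)
    (hm2 : ∀ m' : ℕ, 0 < m' → m' < m →
        (fun x => sAff (cz : ℝ) (D.aSimple j) (sAff (cz : ℝ) (D.aSimple k) x))^[m'] ≠ id)
    (f : V → ℂ) (lam : V) (hlam : lam ∈ D.weightLattice) :
    altComp (Iop (cz : ℝ) τ (D.aSimple j)) (Iop (cz : ℝ) τ (D.aSimple k)) m f lam
      = altComp (Iop (cz : ℝ) τ (D.aSimple k)) (Iop (cz : ℝ) τ (D.aSimple j)) m f lam := by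
  have hj := aSimple_mem D j
  have hk := aSimple_mem D k
  have nj := aSimple_ne D j
  have nk := aSimple_ne D k
  have x1 := aval_int D cz _ hj lam hlam
  have x2 := aval_int D cz _ hk lam hlam
  have ob := obtuse D j k hjk
  have hdep := simple_dep D j k hjk
  have tj := hτ.1 _ (show D.IsAffRoot (D.aSimple j) from hj)
  have tk := hτ.1 _ (show D.IsAffRoot (D.aSimple k) from hk)
  obtain ⟨A, hA⟩ := D.crystallographic _ hk _ hj
  obtain ⟨B, hB⟩ := D.crystallographic _ hj _ hk
  have hte := tau_eq D cz τ hτ (D.aSimple j) (D.aSimple k) hj hk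
  generalize D.aSimple j = a at *
  generalize D.aSimple k = b at *
  rcases hdep with hli | ⟨h1, h2⟩
  · have pa := inner_self_pos' _ nj
    have pb := inner_self_pos' _ nk
    have cs := cs_strict _ _ nj nk hli
    have hA' : 2 / ⟪b.1, b.1⟫ * ⟪a.1, b.1⟫ = A := by rw [← hA, inner_coroot_eq]
    have hB' : 2 / ⟪a.1, a.1⟫ * ⟪a.1, b.1⟫ = B := by
      rw [← hB, inner_coroot_eq, real_inner_comm a.1 b.1]
    have A0 : A ≤ 0 := by
      have : (A:ℝ) ≤ 0 := by
        rw [← hA']; exact mul_nonpos_of_nonneg_of_nonpos (by positivity) ob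
      exact_mod_cast this
    have B0 : B ≤ 0 := by
      have : (B:ℝ) ≤ 0 := by
        rw [← hB']; exact mul_nonpos_of_nonneg_of_nonpos (by positivity) ob
      exact_mod_cast this
    obtain ⟨A', hA2⟩ := Int.eq_ofNat_of_zero_le (show 0 ≤ -A by omega)
    obtain ⟨B', hB2⟩ := Int.eq_ofNat_of_zero_le (show 0 ≤ -B by omega)
    obtain rfl : A = -(A':ℤ) := by omega
    obtain rfl : B = -(B':ℤ) := by omega
    have hAB : (A':ℝ) * B' < 4 := by
      rw [hA, hB] at cs
      push_cast at cs
      linarith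
    refine braid_pair (A := A') (B := B') ⟨nj, nk, by rw [hA]; push_cast; rfl, by rw [hB]; push_cast; rfl, hli, ?_, tj, tk⟩
      (by exact_mod_cast hAB) ?_ ?_ m hm hm1 hm2 f lam x1 x2
    · intro h; linarith
    · have z1 : A' = 0 ↔ ⟪a.1, b.1⟫ = 0 := by
        rw [← Nat.cast_eq_zero (R := ℝ), ← neg_eq_zero]
        have : -(A':ℝ) = ((-(A':ℤ) : ℤ) : ℝ) := by push_cast; rfl
        rw [this, ← hA']
        simp [pb.ne', nk]
      have z2 : B' = 0 ↔ ⟪a.1, b.1⟫ = 0 := by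
        rw [← Nat.cast_eq_zero (R := ℝ), ← neg_eq_zero]
        have : -(B':ℝ) = ((-(B':ℤ) : ℤ) : ℝ) := by push_cast; rfl
        rw [this, ← hB']
        simp [pa.ne', nj]
      rw [z1, z2]
    · intro e1 e2
      subst e1 e2
      exact hte (by rw [hA]; simp) (by rw [hB]; simp)
  · exact absurd hm1 (trans_infinite cz (by exact_mod_cast (by omega : cz ≠ 0)) a b h1 nk h2 m hm)

end RootFacts
section OmegaFacts
variable {V : Type*} [NormedAddCommGroup V] [InnerProductSpace ℝ V]

theorem lr_inner (α x y : V) : ⟪lr α x, lr α y⟫ = ⟪x, y⟫ := by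
  by_cases h : α = 0
  · subst h; simp [lr]
  have h0 := (inner_self_pos' α h).ne'
  unfold lr
  rw [inner_coroot_eq, inner_coroot_eq, inner_sub_left, inner_sub_right, inner_sub_right,
    real_inner_smul_left, real_inner_smul_left, real_inner_smul_right, real_inner_smul_right,
    real_inner_comm y α]
  field_simp
  ring

theorem perm_apply_inv (u : Equiv.Perm V) (x : V) : u (u⁻¹ x) = x := Equiv.apply_symm_apply u x
theorem perm_inv_apply (u : Equiv.Perm V) (x : V) : u⁻¹ (u x) = x := Equiv.symm_apply_apply u x

/-- the affine isometries -/
def IsAffIso (u : V → V) : Prop :=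
  ∃ L : V →ₗ[ℝ] V, (∀ x y, ⟪L x, L y⟫ = ⟪x, y⟫) ∧ ∃ v, ∀ x, u x = L x + v

theorem wext_affIso (D : RootSystemData V) (c : ℝ) (u : Equiv.Perm V) (hu : u ∈ D.Wext c) :
    IsAffIso (u : V → V) ∧ IsAffIso (u⁻¹ : Equiv.Perm V) := by
  have hrefl : ∀ (e : Equiv.Perm V) (a : V × ℤ), (∀ x, e x = sAff c a x) →
      IsAffIso (e : V → V) := by
    intro e a h
    refine ⟨⟨⟨lr a.1, lr_add a.1⟩, fun k x => lr_smul a.1 x k⟩, lr_inner a.1,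
      -((a.2 : ℝ) * c) • a.1, fun x => ?_⟩
    rw [h]
    change _ = lr a.1 x + _
    unfold sAff aval lr
    module
  have htr : ∀ (e : Equiv.Perm V) (v : V), (∀ x, e x = x + v) → IsAffIso (e : V → V) := by
    intro e v h
    exact ⟨LinearMap.id, fun _ _ => rfl, v, h⟩
  have hcomp : ∀ (e f : Equiv.Perm V), IsAffIso (e : V → V) → IsAffIso (f : V → V) →
      IsAffIso ((e * f : Equiv.Perm V) : V → V) := by
    rintro e f ⟨L, hL, v, hv⟩ ⟨M, hM, w, hw⟩
    refine ⟨L ∘ₗ M, fun x y => ?_, L w + v, fun x => ?_⟩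
    · rw [LinearMap.comp_apply, LinearMap.comp_apply, hL, hM]
    · rw [Equiv.Perm.mul_apply, hv, hw, map_add, LinearMap.comp_apply, add_assoc]
  induction hu using Subgroup.closure_induction with
  | mem e he =>
    rcases he with ⟨a, ha, h⟩ | ⟨lam, hl, h⟩
    · refine ⟨hrefl e a h, ?_⟩
      have : e = sPerm c a (D.ne_zero _ ha) := by ext x; exact h x
      apply hrefl _ a
      intro x; rw [this]; rfl
    · refine ⟨htr e _ h, htr _ (-(c • lam)) ?_⟩
      intro x
      rw [Equiv.Perm.inv_eq_iff_eq, h]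
      abel
  | one => exact ⟨htr _ 0 (fun x => by simp), htr _ 0 (fun x => by simp)⟩
  | mul e f _ _ ih1 ih2 =>
    refine ⟨hcomp _ _ ih1.1 ih2.1, ?_⟩
    rw [mul_inv_rev]
    exact hcomp _ _ ih2.2 ih1.2
  | inv e _ ih => exact ⟨ih.2, by rw [inv_inv]; exact ih.1⟩

theorem coroot_coroot (α : V) (h : α ≠ 0) : coroot (coroot α) = α := by
  have h0 := (inner_self_pos' α h).ne'
  unfold coroot
  rw [real_inner_smul_left, real_inner_smul_right, smul_smul]
  have : 2 / (2 / ⟪α, α⟫ * (2 / ⟪α, α⟫ * ⟪α, α⟫)) * (2 / ⟪α, α⟫) = 1 := by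
    field_simp
  rw [this, one_smul]

theorem omega_conj (D : RootSystemData V) (c : ℝ) (τ : V × ℤ → ℂ) (hτ : D.IsMultiplicity c τ)
    (u : Equiv.Perm V) (hu : u ∈ D.Wext c) (a b : V × ℤ) (ha : a.1 ∈ D.R0) (hb : b.1 ∈ D.R0)
    (h : ∀ x : V, aval c a (u⁻¹ x) = aval c b x) (f : V → ℂ) (x : V) :
    Iop c τ a (fun y => f (u y)) (u⁻¹ x) = Iop c τ b f x := by
  have ht : τ a = τ b := hτ.2 u hu a b ha hb h
  obtain ⟨L, hL, v, hv⟩ := (wext_affIso D c u hu).1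
  have huu : ∀ y, aval c a y = aval c b (u y) := by
    intro y
    have := h (u y)
    rwa [perm_inv_apply] at this
  have hLc : ∀ y, ⟪y, coroot a.1⟫ = ⟪L y, coroot b.1⟫ := by
    intro y
    have h1 := huu y
    have h2 := huu 0
    rw [hv] at h1 h2
    unfold aval at h1 h2
    rw [map_zero] at h2
    rw [inner_add_left] at h1 h2
    rw [inner_zero_left, inner_zero_left] at h2
    linarith
  have hcor : L (coroot a.1) = coroot b.1 := by
    obtain ⟨w, hw⟩ : ∃ w, L w = coroot b.1 := by
      refine ⟨u⁻¹ (coroot b.1 + v), ?_⟩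
      have := hv (u⁻¹ (coroot b.1 + v))
      rw [perm_apply_inv] at this
      exact (add_right_cancel this).symm
    have : w = coroot a.1 := by
      apply ext_inner_left ℝ
      intro y
      rw [hLc y, ← hw, hL]
    rw [← this, hw]
  have hLa : L a.1 = b.1 := by
    rw [← coroot_coroot a.1 (D.ne_zero _ ha), ← coroot_coroot b.1 (D.ne_zero _ hb), ← hcor]
    conv_lhs => rw [coroot]
    conv_rhs => rw [coroot]
    rw [map_smul, hL]
  have hadd : ∀ k : ℤ, u (u⁻¹ x + k • a.1) = x + k • b.1 := by
    intro k
    have h1 := hv (u⁻¹ x)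
    rw [perm_apply_inv] at h1
    rw [hv, map_add, map_zsmul, hLa]
    rw [eq_sub_of_add_eq h1.symm]
    abel
  have hsub : ∀ k : ℤ, u (u⁻¹ x - k • a.1) = x - k • b.1 := by
    intro k
    have := hadd (-k)
    rwa [neg_smul, neg_smul, ← sub_eq_add_neg, ← sub_eq_add_neg] at this
  have hs : u (sAff c a (u⁻¹ x)) = sAff c b x := by
    have h1 := hv (u⁻¹ x)
    rw [perm_apply_inv] at h1
    rw [sAff, hv, map_sub, map_smul, hLa, h, sAff]
    rw [eq_sub_of_add_eq h1.symm]
    abel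
  unfold Iop Jop
  simp only [h, hadd, hsub, hs, ht]

theorem omega_trans (D : RootSystemData V) (c : ℝ)
    (u : Equiv.Perm V) (hu : u ∈ D.Wext c) (x lam : V) :
    u (u⁻¹ x - lam) = x - linPart u lam := by
  obtain ⟨L, hL, v, hv⟩ := (wext_affIso D c u hu).1
  have h1 := hv (u⁻¹ x)
  rw [perm_apply_inv] at h1
  unfold linPart
  rw [hv, hv lam, hv 0, map_sub, map_zero]
  rw [eq_sub_of_add_eq h1.symm]
  abel

end OmegaFacts

open RootSystemData in
/-- the integral-reflection operators `I_j`, the action of `Ω` and the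
translations `t_λ` satisfy the defining relations of the double affine Hecke algebra
at critical level, as operators on functions over the weight lattice `P`. -/
theorem statement2 {V : Type*} [NormedAddCommGroup V] [InnerProductSpace ℝ V]
    (D : RootSystemData V) (cz : ℤ) (hc : 1 < cz)
    (τ : V × ℤ → ℂ) (hτ : D.IsMultiplicity (cz : ℝ) τ) :
    -- (i) quadratic relations (I_j - τ_j) ∘ (I_j + τ_j⁻¹) = 0
    (∀ j : Fin (D.n + 1), ∀ f : V → ℂ, ∀ lam ∈ D.weightLattice,
      Iop (cz : ℝ) τ (D.aSimple j)
          (fun y => Iop (cz : ℝ) τ (D.aSimple j) f y + (τ (D.aSimple j))⁻¹ * f y) lam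
        - τ (D.aSimple j) *
            (Iop (cz : ℝ) τ (D.aSimple j) f lam + (τ (D.aSimple j))⁻¹ * f lam) = 0) ∧
    -- (ii) braid relations, with m = the (finite) order of s_{a_j} s_{a_k} in W
    (∀ j k : Fin (D.n + 1), j ≠ k → ∀ m : ℕ, 0 < m →
      (fun x => sAff (cz : ℝ) (D.aSimple j) (sAff (cz : ℝ) (D.aSimple k) x))^[m] = id →
      (∀ m' : ℕ, 0 < m' → m' < m →
        (fun x => sAff (cz : ℝ) (D.aSimple j) (sAff (cz : ℝ) (D.aSimple k) x))^[m'] ≠ id) →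
      ∀ f : V → ℂ, ∀ lam ∈ D.weightLattice,
        altComp (Iop (cz : ℝ) τ (D.aSimple j)) (Iop (cz : ℝ) τ (D.aSimple k)) m f lam
          = altComp (Iop (cz : ℝ) τ (D.aSimple k)) (Iop (cz : ℝ) τ (D.aSimple j)) m f lam) ∧
    -- (iii) Ω-conjugation: u ∘ I_j ∘ u⁻¹ = I_{u_j} and u ∘ t_λ ∘ u⁻¹ = t_{u′λ}
    (∀ u : Equiv.Perm V, u ∈ D.Wext (cz : ℝ) → D.len (cz : ℝ) u = 0 →
      (∀ j k : Fin (D.n + 1),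
        (∀ x : V, aval (cz : ℝ) (D.aSimple j) (u⁻¹ x) = aval (cz : ℝ) (D.aSimple k) x) →
        ∀ f : V → ℂ, ∀ lam ∈ D.weightLattice,
          Iop (cz : ℝ) τ (D.aSimple j) (fun y => f (u y)) (u⁻¹ lam)
            = Iop (cz : ℝ) τ (D.aSimple k) f lam) ∧
      (∀ lam ∈ D.weightLattice, ∀ f : V → ℂ, ∀ x ∈ D.weightLattice,
        f (u (u⁻¹ x - lam)) = f (x - linPart u lam))) ∧
    -- (iv) t_λ ∘ t_μ = t_{λ+μ}
    (∀ lam ∈ D.weightLattice, ∀ mu ∈ D.weightLattice, ∀ f : V → ℂ,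
      ∀ x ∈ D.weightLattice, f (x - lam - mu) = f (x - (lam + mu))) ∧
    -- (v) cross relation I_j ∘ t_ν = t_{s_j′ν} ∘ I_j + (τ_j - τ_j⁻¹) G_{j,ν}
    (∀ j : Fin (D.n + 1), ∀ ν ∈ D.Ptheta, ∀ f : V → ℂ, ∀ lam ∈ D.weightLattice,
      Iop (cz : ℝ) τ (D.aSimple j) (fun y => f (y - ν)) lam
        = Iop (cz : ℝ) τ (D.aSimple j) f
            (lam - (ν - ⟪ν, coroot (D.aSimple j).1⟫ • (D.aSimple j).1))
          + (τ (D.aSimple j) - (τ (D.aSimple j))⁻¹) * Gop D (cz : ℝ) j ν f lam) := by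
  refine ⟨?_, ?_, ?_, ?_, ?_⟩
  · intro j f lam hlam
    obtain ⟨p, hp⟩ := aval_int D cz _ (aSimple_mem D j) lam hlam
    exact quad_rel _ τ _ (aSimple_ne D j) (hτ.1 _ (aSimple_mem D j)) f lam p hp
  · intro j k hjk m hm hm1 hm2 f lam hlam
    exact braid_final D cz hc τ hτ j k hjk m hm hm1 hm2 f lam hlam
  · intro u hu _
    refine ⟨fun j k h f lam _ => ?_, fun lam _ f x _ => ?_⟩
    · exact omega_conj D cz τ hτ u hu _ _ (aSimple_mem D j) (aSimple_mem D k) h f lam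
    · rw [omega_trans D cz u hu]
  · intro lam _ mu _ f x _
    rw [sub_sub]
  · intro j ν hν f lam hlam
    obtain ⟨p, hp⟩ := aval_int D cz _ (aSimple_mem D j) lam hlam
    obtain ⟨n, hn⟩ := hν.1 _ (aSimple_mem D j)
    exact cross_rel _ τ _ (aSimple_ne D j) f lam ν p n hp hn
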